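/- arXiv:1708.06054 — 3 statements merged into one kernel-verified Lean document; each statement's English description precedes it below -/
import Mathlib

section
/- Let H ⊂ F₂^S be the binary code on the set S = P²(F₄) of 21 points of the projective plane over F₄, generated by the 21 characteristic vectors of F₄-rational lines (each of weight 5). Then dim H = 10 and H has weight distribution 0¹ 5²¹ 8²¹⁰ 9²⁸⁰ 12²⁸⁰ 13²¹⁰ 16²¹ 21¹. -/
open scoped BigOperators Classical

/-- The field `F₄`. -/
abbrev F4 : Type := GaloisField 2 2

/-- The set `S = P²(F₄)`: points of the projective plane over `F₄`,
as 1-dimensional linear subspaces of `F₄³`. -/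
def ProjPt : Type := {p : Submodule F4 (Fin 3 → F4) // Module.finrank F4 p = 1}

/-- `F₄`-rational lines of `P²`, as 2-dimensional linear subspaces of `F₄³`. -/
def ProjLine : Type := {l : Submodule F4 (Fin 3 → F4) // Module.finrank F4 l = 2}

/-- The characteristic vector `ℓ(F₄) ⊆ S` of a line. -/
noncomputable def lineWord (l : ProjLine) : ProjPt → ZMod 2 :=
  fun p => if p.val ≤ l.val then 1 else 0

/-- The code `H ⊆ F₂^S` spanned by the characteristic vectors of the lines. -/
noncomputable def Hcode : Submodule (ZMod 2) (ProjPt → ZMod 2) :=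
  Submodule.span (ZMod 2) (Set.range lineWord)

/-- Weight of a word in `F₂^S`. -/
noncomputable def wtS (w : ProjPt → ZMod 2) : ℕ := Nat.card {p : ProjPt // w p ≠ 0}

/-!
Let `C` be the code of all words `p ↦ f p`, where `f : F₄³ → F₂` is an `F₄ˣ`-invariant quadratic
map, that is, the diagonal `v ↦ h (v, v)` of a Hermitian form `h`. The complement of a line `φ = 0`
is such a word, namely `v ↦ φ(v)³`, so a sum of two line words lies in `H ∩ C`.

The sum of `(-1) ^ f v` over `F₄³` is `64 - 6 wt f`; its square is `64` times the cardinality of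
the radical of `f`, and it is `1` modulo `3`, so it is `(-2) ^ (3 + k)` with `k ≤ 3`. Hence the
weights of `C` are among `0`, `8`, `12`, `16`.

Through any one of three given points there is a line missing the other two, and some line misses
all three, so words of `H ∩ C` take arbitrary values on any three points. The resulting binomial
moments of orders `0, 1, 2, 3` determine the dimension and the weight distribution of any such code
with weights in `{0, 8, 12, 16}`. This applies to both `H ∩ C` and `C`, which therefore coincide,
and `H = C ⊕ ⟨1⟩`.
-/

section Code

variable {ι F : Type*}

section Strength

variable [Field F]

/-- `C` has strength `t` (as an orthogonal array) if its words take all possible values on every set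
of at most `t` coordinates. -/
def HasStrength (C : Submodule F (ι → F)) (t : ℕ) : Prop :=
  ∀ T : Finset ι, T.card ≤ t → ∀ x : T → F, ∃ c ∈ C, ∀ i : T, c i = x i

lemma hasStrength_of_forall_exists_single {C : Submodule F (ι → F)} {t : ℕ}
    (h : ∀ T : Finset ι, T.card ≤ t → ∀ i ∈ T, ∃ c ∈ C, c i = 1 ∧ ∀ j ∈ T, j ≠ i → c j = 0) :
    HasStrength C t := by
  intro T hT x
  choose! e he_mem he_one he_zero using h T hT
  refine ⟨∑ i : T, x i • e i, C.sum_mem fun i _ => C.smul_mem _ (he_mem i i.2), fun j => ?_⟩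
  rw [Finset.sum_apply, Finset.sum_eq_single j]
  · simp [he_one j j.2]
  · intro i _ hij
    simp [he_zero i i.2 j j.2 (Subtype.coe_ne_coe.2 hij.symm)]
  · simp

lemma HasStrength.mono {C D : Submodule F (ι → F)} {t : ℕ} (hC : HasStrength C t) (hCD : C ≤ D) :
    HasStrength D t := fun T hT x =>
  let ⟨c, hc, hcx⟩ := hC T hT x
  ⟨c, hCD hc, hcx⟩

variable [Fintype ι] [Fintype F] [DecidableEq F] {C : Submodule F (ι → F)} {t : ℕ}

lemma HasStrength.card_pow_mul_card_vanishing (hC : HasStrength C t) {T : Finset ι}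
    (hT : T.card ≤ t) :
    Fintype.card F ^ T.card * Fintype.card {c : C // ∀ i ∈ T, c.val i = 0} = Fintype.card C := by
  let res : C →ₗ[F] (T → F) := LinearMap.funLeft F F (Subtype.val : T → ι) ∘ₗ C.subtype
  have res_surj : Function.Surjective res := fun x => by
    obtain ⟨c, hc, hcx⟩ := hC T hT x
    exact ⟨⟨c, hc⟩, funext hcx⟩
  have card_ker : Nat.card res.toAddMonoidHom.ker =
      Fintype.card {c : C // ∀ i ∈ T, c.val i = 0} := by
    rw [← Nat.card_eq_fintype_card]
    refine Nat.card_congr (Equiv.subtypeEquivRight fun c => ?_)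
    simp [res, AddMonoidHom.mem_ker, funext_iff]
  have card_range : Nat.card (C ⧸ res.toAddMonoidHom.ker) = Fintype.card F ^ T.card := by
    rw [Nat.card_congr (QuotientAddGroup.quotientKerEquivOfSurjective res.toAddMonoidHom
      res_surj).toEquiv]
    simp
  rw [← card_ker, ← card_range, ← AddSubgroup.card_eq_card_quotient_mul_card_addSubgroup,
    Nat.card_eq_fintype_card]

lemma HasStrength.card_pow_mul_sum_choose (hC : HasStrength C t) {s : ℕ} (hs : s ≤ t) :
    Fintype.card F ^ s * ∑ c : C, (Fintype.card ι - hammingNorm c.val).choose s =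
      (Fintype.card ι).choose s * Fintype.card C := by
  have choose_eq (c : C) : (Fintype.card ι - hammingNorm c.val).choose s =
      ∑ T ∈ Finset.univ.powersetCard s, if ∀ i ∈ T, c.val i = 0 then 1 else 0 := by
    have card_zeros : Fintype.card ι - hammingNorm c.val =
        (Finset.univ.filter fun i => c.val i = 0).card := by
      simp only [hammingNorm, ← Finset.card_compl, Finset.compl_filter, not_not]
    rw [card_zeros, ← Finset.card_powersetCard, ← Finset.card_filter]
    congr 1
    ext T
    simp [Finset.mem_powersetCard, Finset.subset_iff, and_comm]
  calc Fintype.card F ^ s * ∑ c : C, (Fintype.card ι - hammingNorm c.val).choose s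
      = ∑ T ∈ Finset.univ.powersetCard s,
          Fintype.card F ^ s * Fintype.card {c : C // ∀ i ∈ T, c.val i = 0} := by
        simp_rw [choose_eq]
        rw [Finset.sum_comm, Finset.mul_sum]
        simp_rw [← Finset.card_filter, Fintype.card_subtype]
    _ = ∑ _ ∈ Finset.univ.powersetCard (α := ι) s, Fintype.card C := by
        refine Finset.sum_congr rfl fun T hT => ?_
        obtain rfl := (Finset.mem_powersetCard.1 hT).2
        exact hC.card_pow_mul_card_vanishing hs
    _ = (Fintype.card ι).choose s * Fintype.card C := by
        simp

end Strength

section WeightCount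

variable [Field F] [DecidableEq F] [Fintype ι]

/-- The weight distribution of `C`: the number of words of Hamming weight `m`. -/
noncomputable def weightCount (C : Submodule F (ι → F)) (m : ℕ) : ℕ :=
  {c | c ∈ C ∧ hammingNorm c = m}.ncard

lemma natCard_hammingNorm_eq (C : Submodule F (ι → F)) (m : ℕ) :
    Nat.card {c : C // hammingNorm c.val = m} = weightCount C m :=
  Nat.card_congr (Equiv.subtypeSubtypeEquivSubtypeInter (· ∈ C) (hammingNorm · = m))

lemma weightCount_zero (C : Submodule F (ι → F)) : weightCount C 0 = 1 := by
  rw [weightCount, Set.ncard_eq_one]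
  exact ⟨0, by ext c; simp +contextual [C.zero_mem]⟩

lemma weightCount_eq_zero {C : Submodule F (ι → F)} {m : ℕ} (h : ∀ c ∈ C, hammingNorm c ≠ m) :
    weightCount C m = 0 := by
  have no_words : {c | c ∈ C ∧ hammingNorm c = m} = ∅ :=
    Set.eq_empty_of_forall_notMem fun c hc => h c hc.1 hc.2
  rw [weightCount, no_words, Set.ncard_empty]

lemma sum_comp_hammingNorm [Fintype F] (C : Submodule F (ι → F)) {W : Finset ℕ}
    (hW : ∀ c ∈ C, hammingNorm c ∈ W) (g : ℕ → ℕ) :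
    ∑ c : C, g (hammingNorm c.val) = ∑ m ∈ W, weightCount C m * g m := by
  rw [← Finset.sum_fiberwise_of_maps_to (g := fun c : C => hammingNorm c.val)
    (fun c _ => hW c c.2)]
  refine Finset.sum_congr rfl fun m _ => ?_
  rw [← natCard_hammingNorm_eq, Nat.card_eq_fintype_card, Fintype.card_subtype, ← smul_eq_mul]
  exact Finset.sum_eq_card_nsmul fun c hc => by rw [(Finset.mem_filter.1 hc).2]

end WeightCount

section Complement

lemma add_one_add_one (w : ι → ZMod 2) : w + 1 + 1 = w := by
  rw [add_assoc, ZModModule.add_self, add_zero]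

lemma zmod_two_eq_zero_or_one : ∀ a : ZMod 2, a = 0 ∨ a = 1 := by decide

lemma mem_sup_span_one_iff {C : Submodule (ZMod 2) (ι → ZMod 2)} {w : ι → ZMod 2} :
    w ∈ C ⊔ Submodule.span (ZMod 2) {1} ↔ w ∈ C ∨ w + 1 ∈ C := by
  constructor
  · intro hw
    obtain ⟨c, hc, _, hone, rfl⟩ := Submodule.mem_sup.1 hw
    obtain ⟨a, rfl⟩ := Submodule.mem_span_singleton.1 hone
    obtain rfl | rfl := zmod_two_eq_zero_or_one a
    · left; simpa
    · right; simpa [add_one_add_one]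
  · rintro (hw | hw)
    · exact Submodule.mem_sup_left hw
    · rw [← add_one_add_one w]
      exact Submodule.add_mem_sup hw (Submodule.mem_span_singleton_self 1)

lemma finrank_sup_span_one [Finite ι] {C : Submodule (ZMod 2) (ι → ZMod 2)} (hC : 1 ∉ C) :
    Module.finrank (ZMod 2) ↥(C ⊔ Submodule.span (ZMod 2) {1}) =
      Module.finrank (ZMod 2) C + 1 := by
  have one_ne_zero : (1 : ι → ZMod 2) ≠ 0 := fun h => hC (h ▸ C.zero_mem)
  have inf_eq_bot := ((Submodule.disjoint_span_singleton' one_ne_zero).2 hC).eq_bot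
  rw [← finrank_span_singleton (K := ZMod 2) one_ne_zero,
    ← Submodule.finrank_sup_add_finrank_inf_eq, inf_eq_bot, finrank_bot, add_zero]

variable [Fintype ι]

lemma hammingNorm_add_one (w : ι → ZMod 2) :
    hammingNorm (w + 1) = Fintype.card ι - hammingNorm w := by
  have add_one_ne_zero_iff : ∀ a : ZMod 2, a + 1 ≠ 0 ↔ ¬ a ≠ 0 := by decide
  simp only [hammingNorm, Pi.add_apply, Pi.one_apply, add_one_ne_zero_iff]
  rw [← Finset.compl_filter, Finset.card_compl]

lemma weightCount_sup_span_one {C : Submodule (ZMod 2) (ι → ZMod 2)} (hC : 1 ∉ C) {m : ℕ}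
    (hm : m ≤ Fintype.card ι) :
    weightCount (C ⊔ Submodule.span (ZMod 2) {1}) m =
      weightCount C m + weightCount C (Fintype.card ι - m) := by
  have words_eq : {w | w ∈ C ⊔ Submodule.span (ZMod 2) {1} ∧ hammingNorm w = m} =
      {c | c ∈ C ∧ hammingNorm c = m} ∪
        (· + 1) '' {c | c ∈ C ∧ hammingNorm c = Fintype.card ι - m} := by
    ext w
    have mem_image : w ∈ (· + 1) '' {c | c ∈ C ∧ hammingNorm c = Fintype.card ι - m} ↔
        w + 1 ∈ C ∧ hammingNorm w = m := by
      have hw : hammingNorm w ≤ Fintype.card ι := hammingNorm_le_card_fintype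
      have sub_eq_sub_iff : Fintype.card ι - hammingNorm w = Fintype.card ι - m ↔
          hammingNorm w = m := by omega
      rw [Set.image_eq_preimage_of_inverse (g := (· + 1)) add_one_add_one add_one_add_one]
      simp [hammingNorm_add_one, sub_eq_sub_iff]
    rw [Set.mem_union, mem_image, Set.mem_ofPred_eq, Set.mem_ofPred_eq, mem_sup_span_one_iff,
      or_and_right]
  have words_disjoint : Disjoint {c | c ∈ C ∧ hammingNorm c = m}
      ((· + 1) '' {c | c ∈ C ∧ hammingNorm c = Fintype.card ι - m}) := by
    rw [Set.disjoint_left]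
    rintro _ ⟨hc, -⟩ ⟨c, ⟨hc', -⟩, rfl⟩
    exact hC ((C.add_mem_iff_right hc').1 hc)
  rw [weightCount, words_eq, Set.ncard_union_eq words_disjoint,
    Set.ncard_image_of_injective _ (add_left_injective 1), weightCount, weightCount]

end Complement

section StrengthThree

variable [Fintype ι] {C : Submodule (ZMod 2) (ι → ZMod 2)}

lemma HasStrength.finrank_eq_and_weightCount_eq (hC : HasStrength C 3)
    (hι : Fintype.card ι = 21)
    (hweights : ∀ c ∈ C, hammingNorm c ∈ ({0, 8, 12, 16} : Finset ℕ)) :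
    Module.finrank (ZMod 2) C = 9 ∧
      weightCount C 8 = 210 ∧ weightCount C 12 = 280 ∧ weightCount C 16 = 21 := by
  have moment (s : ℕ) (hs : s ≤ 3) :
      2 ^ s * ∑ m ∈ {0, 8, 12, 16}, weightCount C m * (21 - m).choose s =
        Nat.choose 21 s * Fintype.card C := by
    rw [← sum_comp_hammingNorm C hweights fun m => (21 - m).choose s, ← hι]
    simpa using hC.card_pow_mul_sum_choose hs
  have moment₀ : 1 + weightCount C 8 + weightCount C 12 + weightCount C 16 =
      Fintype.card C := by
    simpa [weightCount_zero, Nat.choose, add_assoc] using moment 0 (by norm_num)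
  have moment₁ : 2 * (21 + weightCount C 8 * 13 + weightCount C 12 * 9 + weightCount C 16 * 5) =
      21 * Fintype.card C := by
    simpa [weightCount_zero, Nat.choose, add_assoc] using moment 1 (by norm_num)
  have moment₂ : 4 * (210 + weightCount C 8 * 78 + weightCount C 12 * 36 + weightCount C 16 * 10) =
      210 * Fintype.card C := by
    simpa [weightCount_zero, Nat.choose, add_assoc] using moment 2 (by norm_num)
  have moment₃ :
      8 * (1330 + weightCount C 8 * 286 + weightCount C 12 * 84 + weightCount C 16 * 10) =
        1330 * Fintype.card C := by
    simpa [weightCount_zero, Nat.choose, add_assoc] using moment 3 (by norm_num)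
  obtain ⟨card_eq, counts⟩ : Fintype.card C = 512 ∧
      weightCount C 8 = 210 ∧ weightCount C 12 = 280 ∧ weightCount C 16 = 21 := by omega
  have two_pow_finrank : 2 ^ Module.finrank (ZMod 2) C = 2 ^ 9 := by
    simpa [card_eq] using (Module.card_eq_pow_finrank (K := ZMod 2) (V := C)).symm
  exact ⟨Nat.pow_right_injective le_rfl two_pow_finrank, counts⟩

end StrengthThree

end Code

section ProjectiveSum

open scoped LinearAlgebra.Projectivization

lemma sum_eq_apply_zero_add_sum_rep {K V A : Type*} [DivisionRing K] [AddCommGroup V] [Module K V]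
    [AddCommMonoid A] [Fintype V] [Fintype (ℙ K V)] [Fintype Kˣ] {g : V → A}
    (hg : ∀ (c : Kˣ) (v : V), g (c • v) = g v) :
    ∑ v, g v = g 0 + Fintype.card Kˣ • ∑ p : ℙ K V, g p.rep := by
  have smul_rep_bijective : Function.Bijective fun x : Kˣ × ℙ K V =>
      (⟨x.1 • x.2.rep, (smul_ne_zero_iff_ne x.1).2 x.2.rep_nonzero⟩ : {v : V // v ≠ 0}) := by
    constructor
    · rintro ⟨c, p⟩ ⟨d, q⟩ h
      have smul_eq : c • p.rep = d • q.rep := congrArg Subtype.val h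
      obtain rfl : p = q := by
        rw [← p.mk_rep, ← q.mk_rep, Projectivization.mk_eq_mk_iff]
        exact ⟨c⁻¹ * d, by rw [mul_smul, ← smul_eq, inv_smul_smul]⟩
      have hcd : (c : K) = d := smul_left_injective K p.rep_nonzero smul_eq
      rw [Units.ext hcd]
    · rintro ⟨v, hv⟩
      obtain ⟨c, hc⟩ := Projectivization.exists_smul_eq_mk_rep K v hv
      exact ⟨⟨c⁻¹, Projectivization.mk K v hv⟩, Subtype.ext (by simp [← hc])⟩
  have sum_ne_zero : ∑ v : {v : V // v ≠ 0}, g v = Fintype.card Kˣ • ∑ p : ℙ K V, g p.rep := by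
    rw [← smul_rep_bijective.sum_comp, Fintype.sum_prod_type]
    simp [hg]
  rw [← sum_ne_zero, Fintype.sum_eq_add_sum_subtype_ne g 0]

lemma natCard_eq_one_add_mul_sum_rep {K V : Type*} [DivisionRing K] [AddCommGroup V] [Module K V]
    [Finite V] [Fintype (ℙ K V)] [Fintype Kˣ] (W : Submodule K V) :
    Nat.card W = 1 + Fintype.card Kˣ * ∑ p : ℙ K V, if p.rep ∈ W then 1 else 0 := by
  have := Fintype.ofFinite V
  have sum_eq := sum_eq_apply_zero_add_sum_rep (K := K) (g := fun v => if v ∈ W then 1 else 0)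
    fun c v => by simp only [W.smul_mem_iff']
  rwa [if_pos W.zero_mem, smul_eq_mul, ← Finset.card_filter, ← Fintype.card_subtype,
    ← Nat.card_eq_fintype_card] at sum_eq

end ProjectiveSum

section Hermitian

open QuadraticMap (polar polar_comm)

variable {K V : Type*} [Field K] [AddCommGroup V] [Module K V]

variable (K) in
/-- `F₂`-quadratic maps on a `K`-vector space that are invariant under `Kˣ`. For `K = F₄` these are
the maps `v ↦ h (v, v)` with `h` a Hermitian form, whence the name. -/
structure IsHermitianMap (f : V → ZMod 2) : Prop where
  map_smul (c : Kˣ) (v : V) : f (c • v) = f v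
  polar_add_left (u u' v : V) : polar f (u + u') v = polar f u v + polar f u' v

namespace IsHermitianMap

variable {f g : V → ZMod 2}

lemma zero : IsHermitianMap K (0 : V → ZMod 2) :=
  ⟨fun _ _ => rfl, fun _ _ _ => by simp [polar]⟩

lemma add (hf : IsHermitianMap K f) (hg : IsHermitianMap K g) : IsHermitianMap K (f + g) where
  map_smul c v := by simp only [Pi.add_apply, hf.map_smul, hg.map_smul]
  polar_add_left u u' v := by
    simp only [QuadraticMap.polar_add, hf.polar_add_left, hg.polar_add_left]
    abel

lemma const_smul (a : ZMod 2) (hf : IsHermitianMap K f) : IsHermitianMap K (a • f) where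
  map_smul c v := by simp only [Pi.smul_apply, hf.map_smul]
  polar_add_left u u' v := by simp only [QuadraticMap.polar_smul, hf.polar_add_left, smul_add]

lemma map_zero (hf : IsHermitianMap K f) : f 0 = 0 := by
  simpa [polar] using hf.polar_add_left 0 0 0

lemma polar_add_right (hf : IsHermitianMap K f) (u v v' : V) :
    polar f u (v + v') = polar f u v + polar f u v' := by
  simp only [polar_comm f u, hf.polar_add_left]

lemma polar_smul_right (hf : IsHermitianMap K f) (c : Kˣ) (u v : V) :
    polar f u (c • v) = polar f (c⁻¹ • u) v := by
  have smul_add_eq : u + c • v = c • (c⁻¹ • u + v) := by rw [smul_add, smul_inv_smul]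
  simp only [polar, smul_add_eq, hf.map_smul]

/-- The radical of the polar form of `f`, a `K`-subspace because `f` is `Kˣ`-invariant. -/
def radical (hf : IsHermitianMap K f) : Submodule K V where
  carrier := {w | ∀ u, polar f u w = 0}
  zero_mem' u := by simp [polar, hf.map_zero]
  add_mem' hv hw u := by rw [hf.polar_add_right, hv, hw, add_zero]
  smul_mem' c w hw u := by
    obtain rfl | hc := eq_or_ne c 0
    · simp [polar, hf.map_zero]
    · exact (hf.polar_smul_right (Units.mk0 c hc) u w).trans (hw _)

lemma eq_zero_of_mem_radical (hf : IsHermitianMap K f) (hK : 2 < Nat.card K) {w : V}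
    (hw : w ∈ hf.radical) : f w = 0 := by
  have : Finite K := Nat.finite_of_card_ne_zero (by omega)
  have := Fintype.ofFinite K
  obtain ⟨c, -, hc⟩ : ∃ c ∈ Finset.univ, c ∉ ({0, -1} : Finset K) :=
    Finset.exists_mem_notMem_of_card_lt_card
      (Finset.card_le_two.trans_lt (by rwa [Finset.card_univ, ← Nat.card_eq_fintype_card]))
  simp only [Finset.mem_insert, Finset.mem_singleton, not_or] at hc
  -- `f w = f ((1 + c) • w) = f w + f (c • w) = f w + f w`
  have one_add_ne_zero : 1 + c ≠ 0 := fun h => hc.2 (eq_neg_of_add_eq_zero_right h)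
  have map_one_add_smul : f ((1 + c) • w) = f w := hf.map_smul (Units.mk0 _ one_add_ne_zero) w
  have map_smul : f (c • w) = f w := hf.map_smul (Units.mk0 c hc.1) w
  rw [add_smul, one_smul, QuadraticMap.map_add f, hf.radical.smul_mem c hw, map_smul, add_zero]
    at map_one_add_smul
  exact left_eq_add.1 map_one_add_smul.symm

end IsHermitianMap

variable (K V) in
/-- The `F₂`-space of Hermitian maps. -/
def hermitianMaps : Submodule (ZMod 2) (V → ZMod 2) where
  carrier := {f | IsHermitianMap K f}
  zero_mem' := .zero
  add_mem' := .add
  smul_mem' a _ hf := hf.const_smul a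

/-- The nontrivial additive character `a ↦ (-1) ^ a` of `F₂`. -/
noncomputable def signChar : AddChar (ZMod 2) ℤ :=
  AddChar.zmodChar 2 (ζ := -1) (by norm_num)

lemma signChar_apply : ∀ a : ZMod 2, signChar a = if a = 0 then 1 else -1 := by
  decide

variable {f : V → ZMod 2}

lemma IsHermitianMap.sum_signChar_polar [Fintype V] (hf : IsHermitianMap K f) (w : V) :
    ∑ u, signChar (polar f u w) = if w ∈ hf.radical then (Fintype.card V : ℤ) else 0 := by
  let ψ : AddChar V ℤ := signChar.compAddMonoidHom
    (AddMonoidHom.mk' (polar f · w) fun u u' => hf.polar_add_left u u' w)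
  have ψ_eq_zero_iff : ψ = 0 ↔ w ∈ hf.radical := by
    refine AddChar.eq_zero_iff.trans (forall_congr' fun u => ?_)
    change signChar (polar f u w) = 1 ↔ _
    rw [signChar_apply]
    split_ifs with h <;> simp [h]
  exact ψ.sum_eq_ite.trans (by simp only [ψ_eq_zero_iff])

lemma IsHermitianMap.sum_signChar_sq [Fintype V] (hf : IsHermitianMap K f) (hK : 2 < Nat.card K) :
    (∑ v, signChar (f v)) ^ 2 = Nat.card V * Nat.card hf.radical := by
  have signChar_mul_translate (u w : V) :
      signChar (f u) * signChar (f (u + w)) = signChar (f w) * signChar (polar f u w) := by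
    rw [← AddChar.map_add_eq_mul, ← AddChar.map_add_eq_mul, QuadraticMap.map_add f, ← add_assoc,
      ← add_assoc, ZModModule.add_self, zero_add]
  calc (∑ v, signChar (f v)) ^ 2
      = ∑ u, ∑ v, signChar (f u) * signChar (f v) := by rw [sq, Finset.sum_mul_sum]
    _ = ∑ u, ∑ w, signChar (f w) * signChar (polar f u w) := by
        refine Finset.sum_congr rfl fun u _ => ?_
        simp only [← signChar_mul_translate]
        exact (Equiv.sum_comp (Equiv.addLeft u) fun v => signChar (f u) * signChar (f v)).symm
    _ = ∑ w, if w ∈ hf.radical then (Nat.card V : ℤ) else 0 := by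
        rw [Finset.sum_comm]
        refine Finset.sum_congr rfl fun w _ => ?_
        rw [← Finset.mul_sum, hf.sum_signChar_polar]
        split_ifs with hw
        · simp [hf.eq_zero_of_mem_radical hK hw]
        · simp
    _ = Nat.card V * Nat.card hf.radical := by
        rw [← Finset.sum_filter, Finset.sum_const, nsmul_eq_mul, mul_comm, ← Fintype.card_subtype,
          ← Nat.card_eq_fintype_card]

open scoped LinearAlgebra.Projectivization

lemma IsHermitianMap.sum_signChar_eq_card_sub [Fintype V] [Fintype (ℙ K V)]
    (hf : IsHermitianMap K f) (hK : Nat.card K = 4) :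
    ∑ v, signChar (f v) = Nat.card V - 6 * hammingNorm fun p : ℙ K V => f p.rep := by
  have : Finite K := Nat.finite_of_card_ne_zero (by omega)
  have := Fintype.ofFinite K
  have card_units : Fintype.card Kˣ = 3 := by
    rw [Fintype.card_units, ← Nat.card_eq_fintype_card, hK]
  have one_sub_signChar : ∀ a : ZMod 2, 1 - signChar a = if a ≠ 0 then 2 else 0 := by decide
  have sum_one_sub : ∑ v, (1 - signChar (f v)) =
      1 - signChar (f 0) + Fintype.card Kˣ • ∑ p : ℙ K V, (1 - signChar (f p.rep)) :=
    sum_eq_apply_zero_add_sum_rep fun c v => by rw [hf.map_smul]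
  have sum_points : ∑ p : ℙ K V, (1 - signChar (f p.rep)) =
      2 * hammingNorm fun p : ℙ K V => f p.rep := by
    simp only [one_sub_signChar, ← Finset.sum_filter, Finset.sum_const, hammingNorm, nsmul_eq_mul,
      mul_comm]
  rw [sum_points, card_units, hf.map_zero, AddChar.map_zero_eq_one, Finset.sum_sub_distrib,
    Finset.sum_const, Finset.card_univ, ← Nat.card_eq_fintype_card] at sum_one_sub
  simp only [nsmul_eq_mul, mul_one] at sum_one_sub
  push_cast at sum_one_sub
  linarith

lemma neg_two_pow_modEq_one (n : ℕ) : (-2 : ℤ) ^ n ≡ 1 [ZMOD 3] := by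
  simpa using (show (-2 : ℤ) ≡ 1 [ZMOD 3] by decide).pow n

lemma IsHermitianMap.card_sub_six_mul_hammingNorm [Finite V] [Fintype (ℙ K V)]
    (hf : IsHermitianMap K f) (hK : Nat.card K = 4) :
    (4 : ℤ) ^ Module.finrank K V - 6 * hammingNorm (fun p : ℙ K V => f p.rep) =
      (-2) ^ (Module.finrank K V + Module.finrank K hf.radical) := by
  have := Fintype.ofFinite V
  have natCard_eq (W : Submodule K V) : Nat.card W = 4 ^ Module.finrank K W := by
    rw [Module.natCard_eq_pow_finrank (K := K), hK]
  have card_eq : Nat.card V = 4 ^ Module.finrank K V := by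
    rw [Module.natCard_eq_pow_finrank (K := K), hK]
  have sum_eq := hf.sum_signChar_eq_card_sub hK
  have sum_sq := hf.sum_signChar_sq (by omega)
  rw [card_eq, natCard_eq] at sum_sq
  rw [card_eq] at sum_eq
  push_cast at sum_eq sum_sq
  rw [← sum_eq]
  have sq_eq_sq : (∑ v, signChar (f v)) ^ 2 =
      ((-2) ^ (Module.finrank K V + Module.finrank K hf.radical)) ^ 2 := by
    rw [sum_sq, ← pow_add, ← pow_mul, mul_comm, pow_mul]
    norm_num
  refine (sq_eq_sq_iff_eq_or_eq_neg.1 sq_eq_sq).resolve_right fun h => ?_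
  have four_pow : (4 : ℤ) ^ Module.finrank K V ≡ 1 [ZMOD 3] := by
    simpa using (show (4 : ℤ) ≡ 1 [ZMOD 3] by decide).pow (Module.finrank K V)
  have two_pow := neg_two_pow_modEq_one (Module.finrank K V + Module.finrank K hf.radical)
  rw [Int.ModEq] at four_pow two_pow
  omega

lemma IsHermitianMap.hammingNorm_mem_of_finrank_eq_three [Fintype (ℙ K V)]
    (hf : IsHermitianMap K f) (hK : Nat.card K = 4) (hV : Module.finrank K V = 3) :
    hammingNorm (fun p : ℙ K V => f p.rep) ∈ ({0, 8, 12, 16} : Finset ℕ) := by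
  have : Finite K := Nat.finite_of_card_ne_zero (by omega)
  have : Module.Finite K V := Module.finite_of_finrank_eq_succ hV
  have : Finite V := Module.finite_of_finite K
  have weight_eq := hf.card_sub_six_mul_hammingNorm hK
  have finrank_radical_le : Module.finrank K hf.radical ≤ 3 := hV ▸ hf.radical.finrank_le
  rw [hV] at weight_eq
  simp only [Finset.mem_insert, Finset.mem_singleton]
  interval_cases Module.finrank K hf.radical <;> omega

end Hermitian

section Hyperplane

variable {K V : Type*} [Field K] [AddCommGroup V] [Module K V]

lemma exists_dual_le_ker_forall_ne_zero {W : Submodule K V} {s : Finset V} (hs : ∀ v ∈ s, v ∉ W)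
    (hcard : s.card < ENat.card K) :
    ∃ φ : Module.Dual K V, W ≤ LinearMap.ker φ ∧ ∀ v ∈ s, φ v ≠ 0 := by
  let vanishingAt (v : s) : Submodule K W.dualAnnihilator :=
    LinearMap.ker (Module.Dual.eval K V v ∘ₗ W.dualAnnihilator.subtype)
  have vanishingAt_ne_top (v : s) : vanishingAt v ≠ ⊤ := by
    obtain ⟨φ, hφv, hWφ⟩ := Submodule.exists_le_ker_of_notMem (hs v v.2)
    have hφ : φ ∈ W.dualAnnihilator := (Submodule.mem_dualAnnihilator φ).2 hWφ
    exact fun h => hφv (h ▸ Submodule.mem_top : (⟨φ, hφ⟩ : W.dualAnnihilator) ∈ vanishingAt v)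
  have card_univ_lt : (Finset.univ : Finset s).card < ENat.card K := by simpa using hcard
  obtain ⟨φ, -, hφ⟩ := Set.exists_of_ssubset
    (Submodule.iUnion_ssubset_of_forall_ne_top_of_card_lt (M := W.dualAnnihilator) _ vanishingAt
      vanishingAt_ne_top card_univ_lt)
  simp only [Set.mem_iUnion, not_exists] at hφ
  exact ⟨φ, (Submodule.mem_dualAnnihilator φ.1).1 φ.2,
    fun v hv => hφ ⟨v, hv⟩ (Finset.mem_univ _)⟩

lemma exists_dual_ker_eq [FiniteDimensional K V] {W : Submodule K V}
    (hW : Module.finrank K W + 1 = Module.finrank K V) :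
    ∃ φ : Module.Dual K V, LinearMap.ker φ = W := by
  have lt_top : W < ⊤ := lt_top_iff_ne_top.2 fun h => by
    rw [h, finrank_top] at hW
    omega
  obtain ⟨φ, hφ, hle⟩ := W.exists_le_ker_of_lt_top lt_top
  have finrank_ker := Module.Dual.finrank_ker_add_one_of_ne_zero hφ
  exact ⟨φ, (Submodule.eq_of_le_of_finrank_eq hle (by omega)).symm⟩

end Hyperplane

section NonvanishingLocus

variable {K V : Type*} [Field K] [AddCommGroup V] [Module K V]

lemma isHermitianMap_indicator_ne_zero (hK : Nat.card K = 4) (φ : Module.Dual K V) :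
    IsHermitianMap K fun v => if φ v = 0 then 0 else 1 := by
  have : Finite K := Nat.finite_of_card_ne_zero (by omega)
  have := Fintype.ofFinite K
  have card_eq : Fintype.card K = 4 := by rw [← Nat.card_eq_fintype_card, hK]
  have : CharP K 2 := charP_of_card_eq_prime_pow (f := 2) card_eq
  let cast := ZMod.castHom (dvd_refl 2) K
  -- In `K` the indicator becomes the cubic form `s ^ 3`, and the third difference of `s ^ 3` is
  -- `6 * x * y * z`.
  have cast_indicator (s : K) : cast (if s = 0 then 0 else 1) = s ^ 3 := by
    split_ifs with hs
    · simp [hs]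
    · rw [map_one, ← FiniteField.pow_card_sub_one_eq_one s hs, card_eq]
  refine ⟨fun c v => by simp [Units.smul_def], fun u u' v => ?_⟩
  refine QuadraticMap.polar_add_left_iff.2 (cast.injective ?_)
  simp only [map_add, cast_indicator]
  linear_combination 3 * φ u * φ u' * φ v * CharTwo.two_eq_zero (R := K)

end NonvanishingLocus

section ProjectivePlane

open scoped LinearAlgebra.Projectivization

/-- Points of `P²(F₄)` as elements of Mathlib's projectivization. -/
noncomputable def pointEquiv : ℙ F4 (Fin 3 → F4) ≃ ProjPt :=
  Projectivization.equivSubmodule F4 (Fin 3 → F4)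

noncomputable instance : Fintype F4 := Fintype.ofFinite F4

noncomputable instance : Fintype (ℙ F4 (Fin 3 → F4)) := Fintype.ofFinite _

noncomputable instance : Fintype ProjPt := Fintype.ofEquiv _ pointEquiv

lemma natCard_F4 : Nat.card F4 = 4 := by
  simpa using GaloisField.card 2 2 (by norm_num)

lemma card_projPt : Fintype.card ProjPt = 21 := by
  rw [← Fintype.card_congr pointEquiv, ← Nat.card_eq_fintype_card,
    Projectivization.card_of_finrank F4 _ (Module.finrank_fin_fun F4), natCard_F4]
  rfl

namespace ProjPt

/-- A chosen nonzero vector on the point `p`, giving its homogeneous coordinates. -/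
noncomputable def rep (p : ProjPt) : Fin 3 → F4 := (pointEquiv.symm p).rep

lemma span_rep (p : ProjPt) : Submodule.span F4 {p.rep} = p.val := by
  obtain ⟨q, rfl⟩ := pointEquiv.surjective p
  rw [rep, Equiv.symm_apply_apply, ← Projectivization.submodule_eq]
  rfl

lemma le_iff_rep_mem {p : ProjPt} {W : Submodule F4 (Fin 3 → F4)} : p.val ≤ W ↔ p.rep ∈ W := by
  rw [← p.span_rep, Submodule.span_singleton_le_iff_mem]

lemma sum_comp_rep {A : Type*} [AddCommMonoid A] (g : (Fin 3 → F4) → A) :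
    ∑ p : ProjPt, g p.rep = ∑ q : ℙ F4 (Fin 3 → F4), g q.rep :=
  Equiv.sum_comp pointEquiv.symm fun q => g q.rep

lemma hammingNorm_comp_rep (f : (Fin 3 → F4) → ZMod 2) :
    hammingNorm (fun p : ProjPt => f p.rep) =
      hammingNorm fun q : ℙ F4 (Fin 3 → F4) => f q.rep := by
  simp only [hammingNorm, Finset.card_filter]
  exact sum_comp_rep fun v => if f v ≠ 0 then 1 else 0

end ProjPt

lemma wtS_eq_hammingNorm (w : ProjPt → ZMod 2) : wtS w = hammingNorm w := by
  rw [wtS, Nat.card_eq_fintype_card, Fintype.card_subtype, hammingNorm]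

lemma lineWord_apply (l : ProjLine) (p : ProjPt) :
    lineWord l p = if p.rep ∈ l.val then 1 else 0 := by
  simp only [lineWord, ProjPt.le_iff_rep_mem]

lemma wtS_lineWord (l : ProjLine) : wtS (lineWord l) = 5 := by
  have card_line : Nat.card l.val = 4 ^ 2 := by
    rw [Module.natCard_eq_pow_finrank (K := F4), natCard_F4, l.property]
  have card_units : Fintype.card F4ˣ = 3 := by
    rw [Fintype.card_units, ← Nat.card_eq_fintype_card, natCard_F4]
  have weight_eq : wtS (lineWord l) = ∑ p : ProjPt, if p.rep ∈ l.val then 1 else 0 := by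
    simp [wtS_eq_hammingNorm, hammingNorm, lineWord_apply]
  rw [natCard_eq_one_add_mul_sum_rep, card_units,
    ← ProjPt.sum_comp_rep fun v => if v ∈ l.val then 1 else 0, ← weight_eq] at card_line
  omega

end ProjectivePlane

section HermitianCode

/-- The code of values of Hermitian maps on `F₄³` at the points of `P²(F₄)`; these values do not
depend on the chosen representatives, by invariance. -/
noncomputable def hermitianCode : Submodule (ZMod 2) (ProjPt → ZMod 2) :=
  (hermitianMaps F4 (Fin 3 → F4)).map (LinearMap.funLeft (ZMod 2) (ZMod 2) ProjPt.rep)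

lemma hammingNorm_mem_of_mem_hermitianCode {w : ProjPt → ZMod 2} (hw : w ∈ hermitianCode) :
    hammingNorm w ∈ ({0, 8, 12, 16} : Finset ℕ) := by
  obtain ⟨f, hf : IsHermitianMap F4 f, rfl⟩ := hw
  have weight_mem := hf.hammingNorm_mem_of_finrank_eq_three natCard_F4 (Module.finrank_fin_fun F4)
  rwa [← ProjPt.hammingNorm_comp_rep] at weight_mem

lemma one_notMem_hermitianCode : 1 ∉ hermitianCode := fun h => by
  have norm_one : hammingNorm (1 : ProjPt → ZMod 2) = 21 := by simp [hammingNorm, card_projPt]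
  have weight_mem := hammingNorm_mem_of_mem_hermitianCode h
  rw [norm_one] at weight_mem
  revert weight_mem
  decide

lemma lineWord_add_one_mem_hermitianCode (l : ProjLine) : lineWord l + 1 ∈ hermitianCode := by
  obtain ⟨φ, hφ⟩ := exists_dual_ker_eq (W := l.val) (by rw [l.property, Module.finrank_fin_fun])
  refine ⟨_, isHermitianMap_indicator_ne_zero natCard_F4 φ, funext fun p => ?_⟩
  rw [Pi.add_apply, Pi.one_apply, lineWord_apply, ← hφ, LinearMap.mem_ker, LinearMap.funLeft_apply]
  split_ifs <;> decide

lemma lineWord_mem_Hcode (l : ProjLine) : lineWord l ∈ Hcode :=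
  Submodule.subset_span ⟨l, rfl⟩

lemma lineWord_add_lineWord_mem (l m : ProjLine) :
    lineWord l + lineWord m ∈ Hcode ⊓ hermitianCode := by
  refine ⟨add_mem (lineWord_mem_Hcode l) (lineWord_mem_Hcode m), ?_⟩
  have add_eq : lineWord l + lineWord m = (lineWord l + 1) + (lineWord m + 1) := by
    rw [add_add_add_comm, ZModModule.add_self, add_zero]
  rw [add_eq]
  exact add_mem (lineWord_add_one_mem_hermitianCode l) (lineWord_add_one_mem_hermitianCode m)

lemma exists_projLine_le_forall_notMem {W : Submodule F4 (Fin 3 → F4)} {s : Finset (Fin 3 → F4)}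
    (hs : ∀ v ∈ s, v ∉ W) (nonempty : s.Nonempty) (hcard : s.card ≤ 3) :
    ∃ l : ProjLine, W ≤ l.val ∧ ∀ v ∈ s, v ∉ l.val := by
  have card_lt : s.card < ENat.card F4 := by
    rw [ENat.card_eq_coe_natCard, natCard_F4]
    exact_mod_cast Nat.lt_succ_of_le hcard
  obtain ⟨φ, hWφ, hφ⟩ := exists_dual_le_ker_forall_ne_zero hs card_lt
  obtain ⟨v, hv⟩ := nonempty
  have φ_ne_zero : φ ≠ 0 := fun h => hφ v hv (by rw [h, LinearMap.zero_apply])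
  have finrank_ker := Module.Dual.finrank_ker_add_one_of_ne_zero φ_ne_zero
  rw [Module.finrank_fin_fun] at finrank_ker
  exact ⟨⟨LinearMap.ker φ, by omega⟩, hWφ, hφ⟩

lemma exists_projLine_inter_eq_singleton {T : Finset ProjPt} (hT : T.card ≤ 3) {p : ProjPt}
    (hp : p ∈ T) : ∃ l : ProjLine, p.rep ∈ l.val ∧ ∀ q ∈ T, q ≠ p → q.rep ∉ l.val := by
  have ne_top : p.val ≠ ⊤ := fun h => by
    have finrank_eq := p.property
    rw [h, finrank_top, Module.finrank_fin_fun] at finrank_eq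
    omega
  obtain ⟨v, hv⟩ := SetLike.exists_not_mem_of_ne_top p.val ne_top
  have rep_notMem (q : ProjPt) (hq : q ∈ T.erase p) : q.rep ∉ p.val := fun hqp =>
    Finset.ne_of_mem_erase hq (Subtype.ext (Submodule.eq_of_le_of_finrank_eq
      (ProjPt.le_iff_rep_mem.2 hqp) (q.property.trans p.property.symm)))
  have card_le : (insert v ((T.erase p).image ProjPt.rep)).card ≤ 3 :=
    calc (insert v ((T.erase p).image ProjPt.rep)).card
        ≤ ((T.erase p).image ProjPt.rep).card + 1 := Finset.card_insert_le _ _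
      _ ≤ (T.erase p).card + 1 := Nat.add_le_add_right Finset.card_image_le 1
      _ = T.card := Finset.card_erase_add_one hp
      _ ≤ 3 := hT
  obtain ⟨l, hpl, hl⟩ := exists_projLine_le_forall_notMem
    (Finset.forall_mem_insert _ _ _ |>.2 ⟨hv, Finset.forall_mem_image.2 rep_notMem⟩)
    (Finset.insert_nonempty _ _) card_le
  exact ⟨l, ProjPt.le_iff_rep_mem.1 hpl, fun q hq hqp => hl _
    (Finset.mem_insert_of_mem (Finset.mem_image_of_mem _ (Finset.mem_erase.2 ⟨hqp, hq⟩)))⟩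

lemma exists_projLine_disjoint {T : Finset ProjPt} (hT : T.card ≤ 3) (nonempty : T.Nonempty) :
    ∃ l : ProjLine, ∀ q ∈ T, q.rep ∉ l.val := by
  obtain ⟨l, -, hl⟩ := exists_projLine_le_forall_notMem (W := ⊥) (s := T.image ProjPt.rep)
    (by simp [ProjPt.rep, Projectivization.rep_nonzero]) (nonempty.image _)
    (Finset.card_image_le.trans hT)
  exact ⟨l, fun q hq => hl _ (Finset.mem_image_of_mem _ hq)⟩

lemma hasStrength_Hcode_inf_hermitianCode : HasStrength (Hcode ⊓ hermitianCode) 3 := by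
  refine hasStrength_of_forall_exists_single fun T hT p hp => ?_
  obtain ⟨l, hpl, hl⟩ := exists_projLine_inter_eq_singleton hT hp
  obtain ⟨m, hm⟩ := exists_projLine_disjoint hT ⟨p, hp⟩
  refine ⟨_, lineWord_add_lineWord_mem l m, ?_, fun q hq hqp => ?_⟩
  · simp [lineWord_apply, hpl, hm p hp]
  · simp [lineWord_apply, hl q hq hqp, hm q hq]

lemma hasStrength_hermitianCode : HasStrength hermitianCode 3 :=
  hasStrength_Hcode_inf_hermitianCode.mono inf_le_right

lemma finrank_hermitianCode : Module.finrank (ZMod 2) hermitianCode = 9 :=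
  (hasStrength_hermitianCode.finrank_eq_and_weightCount_eq card_projPt
    fun _ => hammingNorm_mem_of_mem_hermitianCode).1

lemma weightCount_hermitianCode :
    weightCount hermitianCode 8 = 210 ∧ weightCount hermitianCode 12 = 280 ∧
      weightCount hermitianCode 16 = 21 :=
  (hasStrength_hermitianCode.finrank_eq_and_weightCount_eq card_projPt
    fun _ => hammingNorm_mem_of_mem_hermitianCode).2

lemma weightCount_hermitianCode_eq_zero {m : ℕ} (hm : m ∉ ({0, 8, 12, 16} : Finset ℕ)) :
    weightCount hermitianCode m = 0 :=
  weightCount_eq_zero fun _ hc hcm => hm (hcm ▸ hammingNorm_mem_of_mem_hermitianCode hc)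

lemma hermitianCode_le_Hcode : hermitianCode ≤ Hcode := by
  have finrank_inf := (hasStrength_Hcode_inf_hermitianCode.finrank_eq_and_weightCount_eq
    card_projPt fun _ hc => hammingNorm_mem_of_mem_hermitianCode hc.2).1
  exact inf_eq_right.1
    (Submodule.eq_of_le_of_finrank_eq inf_le_right (finrank_inf.trans finrank_hermitianCode.symm))

lemma Hcode_eq_hermitianCode_sup_span_one :
    Hcode = hermitianCode ⊔ Submodule.span (ZMod 2) {1} := by
  refine le_antisymm (Submodule.span_le.2 ?_) (sup_le hermitianCode_le_Hcode ?_)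
  · rintro _ ⟨l, rfl⟩
    exact mem_sup_span_one_iff.2 (Or.inr (lineWord_add_one_mem_hermitianCode l))
  · obtain ⟨l, -⟩ := exists_projLine_disjoint (T := {pointEquiv (Classical.arbitrary _)})
      (by simp) (Finset.singleton_nonempty _)
    rw [Submodule.span_singleton_le_iff_mem,
      ← Submodule.add_mem_iff_right _ (lineWord_mem_Hcode l)]
    exact hermitianCode_le_Hcode (lineWord_add_one_mem_hermitianCode l)

lemma wtS_mem_of_mem_Hcode {w : ProjPt → ZMod 2} (hw : w ∈ Hcode) :
    wtS w ∈ ({0, 5, 8, 9, 12, 13, 16, 21} : Set ℕ) := by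
  have norm_le : hammingNorm w ≤ 21 := card_projPt ▸ hammingNorm_le_card_fintype
  have weights := (Hcode_eq_hermitianCode_sup_span_one ▸ mem_sup_span_one_iff).1 hw
  replace weights := weights.imp hammingNorm_mem_of_mem_hermitianCode
    hammingNorm_mem_of_mem_hermitianCode
  rw [hammingNorm_add_one, card_projPt] at weights
  simp only [Finset.mem_insert, Finset.mem_singleton] at weights
  simp only [wtS_eq_hammingNorm, Set.mem_insert_iff, Set.mem_singleton_iff]
  omega

lemma natCard_wtS_eq {m : ℕ} (hm : m ≤ 21) :
    Nat.card {w : ↥Hcode // wtS w.val = m} =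
      weightCount hermitianCode m + weightCount hermitianCode (21 - m) := by
  simp only [wtS_eq_hammingNorm]
  rw [natCard_hammingNorm_eq, Hcode_eq_hermitianCode_sup_span_one,
    weightCount_sup_span_one one_notMem_hermitianCode (by rwa [card_projPt]), card_projPt]

end HermitianCode

/-- `H` is generated by the 21 line words (each of weight 5),
has dimension 10, and weight distribution `0¹ 5²¹ 8²¹⁰ 9²⁸⁰ 12²⁸⁰ 13²¹⁰ 16²¹ 21¹`. -/
theorem Hcode_dim_and_weights :
    Nat.card ProjPt = 21 ∧
    (∀ l : ProjLine, wtS (lineWord l) = 5) ∧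
    Module.finrank (ZMod 2) ↥Hcode = 10 ∧
    (∀ w ∈ Hcode, wtS w ∈ ({0, 5, 8, 9, 12, 13, 16, 21} : Set ℕ)) ∧
    Nat.card {w : ↥Hcode // wtS w.val = 0} = 1 ∧
    Nat.card {w : ↥Hcode // wtS w.val = 5} = 21 ∧
    Nat.card {w : ↥Hcode // wtS w.val = 8} = 210 ∧
    Nat.card {w : ↥Hcode // wtS w.val = 9} = 280 ∧
    Nat.card {w : ↥Hcode // wtS w.val = 12} = 280 ∧
    Nat.card {w : ↥Hcode // wtS w.val = 13} = 210 ∧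
    Nat.card {w : ↥Hcode // wtS w.val = 16} = 21 ∧
    Nat.card {w : ↥Hcode // wtS w.val = 21} = 1 := by
  refine ⟨by rw [Nat.card_eq_fintype_card, card_projPt], wtS_lineWord, ?_,
    fun _ => wtS_mem_of_mem_Hcode, ?_⟩
  · rw [Hcode_eq_hermitianCode_sup_span_one, finrank_sup_span_one one_notMem_hermitianCode,
      finrank_hermitianCode]
  · obtain ⟨count_eight, count_twelve, count_sixteen⟩ := weightCount_hermitianCode
    simp +decide [natCard_wtS_eq, weightCount_hermitianCode_eq_zero, weightCount_zero,
      count_eight, count_twelve, count_sixteen, -Nat.card_eq_fintype_card]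
end

section
/- The automorphism group of the binary code H ⊂ F₂^{P²(F₄)} generated by the F₄-lines of P² is exactly the group PΓL(3,4) of order 120960 acting on the 21 points of P²(F₄). -/
open scoped Classical

/-- The automorphism group of `H`: permutations of `P²(F₄)` preserving `H`. -/
def AutH : Set (Equiv.Perm ProjPt) :=
  {σ | ∀ w : ProjPt → ZMod 2, (fun p => w (σ p)) ∈ Hcode ↔ w ∈ Hcode}

/-- The permutations of `P²(F₄)` induced by `ΓL(3,4)`: invertible semilinear
transformations of `F₄³` (over an arbitrary field automorphism `φ` of `F₄`,
i.e. the identity or the Frobenius). -/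
def PGammaL : Set (Equiv.Perm ProjPt) :=
  {σ | ∃ (φ : F4 ≃+* F4) (g : (Fin 3 → F4) ≃ (Fin 3 → F4)),
    (∀ x y, g (x + y) = g x + g y) ∧
    (∀ (c : F4) (x), g (c • x) = φ c • g x) ∧
    (∀ p : ProjPt, ((σ p).val : Set (Fin 3 → F4)) = g '' (p.val : Set (Fin 3 → F4)))}

/-!
In a projective plane of order `q` with `q = 0` in `R`, distinct lines share one point and a line
has `q + 1` points, which is `1` in `R`, so the sum of a codeword over any line equals its sum over
all points. If `σ` preserves the code, the preimage of a line under `σ` has `q + 1` points and its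
characteristic vector is a codeword with total sum `1`; hence it meets every line, and a set of
`q + 1` points that meets every line is a line. So the automorphisms of the code are the
collineations, which by the fundamental theorem of projective geometry are induced by semilinear
transformations. Since the transformations fixing every point are the homotheties, there are
`|Aut K| * |GL(3, K)| / (q - 1)` of them.
-/

section LineCode

open Configuration

variable {R P L : Type*} [Membership P L]

/-- The code over `R` spanned by the characteristic vectors of the lines of a configuration. -/
noncomputable def lineCode (R P L : Type*) [Semiring R] [Membership P L] : Submodule R (P → R) :=
  Submodule.span R (Set.range fun (l : L) (p : P) => if p ∈ l then 1 else 0)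

/-- The permutations of the coordinates that preserve a code. -/
def codeAut [Semiring R] (C : Submodule R (P → R)) : Subgroup (Equiv.Perm P) where
  carrier := {σ | ∀ w : P → R, (fun p => w (σ p)) ∈ C ↔ w ∈ C}
  one_mem' _ := Iff.rfl
  mul_mem' {σ _} hσ hτ w := (hτ fun p => w (σ p)).trans (hσ w)
  inv_mem' {σ} hσ w := by simpa using (hσ fun p => w (σ⁻¹ p)).symm

/-- The collineations of a configuration with points `P` and lines `L`: the permutations of the
points that carry lines to lines. -/
def collineationGroup (P L : Type*) [Membership P L] : Subgroup (Equiv.Perm P) where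
  carrier := {σ | ∃ τ : Equiv.Perm L, ∀ p l, σ p ∈ τ l ↔ p ∈ l}
  one_mem' := ⟨1, fun _ _ => Iff.rfl⟩
  mul_mem' := by
    rintro _ _ ⟨τ, hτ⟩ ⟨τ', hτ'⟩
    exact ⟨τ * τ', fun p l => (hτ _ _).trans (hτ' p l)⟩
  inv_mem' := by
    rintro σ ⟨τ, hτ⟩
    exact ⟨τ⁻¹, fun p l => by simpa using (hτ (σ⁻¹ p) (τ⁻¹ l)).symm⟩

theorem indicator_mem_lineCode [Semiring R] (l : L) :
    (fun p : P => if p ∈ l then (1 : R) else 0) ∈ lineCode R P L :=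
  Submodule.subset_span ⟨l, rfl⟩

theorem comp_mem_lineCode [Semiring R] {σ : Equiv.Perm P} (hσ : σ ∈ collineationGroup P L)
    {w : P → R} (hw : w ∈ lineCode R P L) : (fun p => w (σ p)) ∈ lineCode R P L := by
  obtain ⟨τ, hτ⟩ := hσ
  suffices lineCode R P L ≤ (lineCode R P L).comap (LinearMap.funLeft R R σ) from this hw
  refine Submodule.span_le.2 ?_
  rintro _ ⟨l, rfl⟩
  have mem_iff : ∀ p, σ p ∈ l ↔ p ∈ τ⁻¹ l := fun p => by simpa using hτ p (τ⁻¹ l)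
  simpa [LinearMap.funLeft, Function.comp_def, mem_iff] using
    indicator_mem_lineCode (R := R) (P := P) (τ⁻¹ l)

theorem collineationGroup_le_codeAut [Semiring R] :
    collineationGroup P L ≤ codeAut (lineCode R P L) := fun σ hσ w =>
  ⟨fun hw => by simpa using comp_mem_lineCode (inv_mem hσ) hw, comp_mem_lineCode hσ⟩

section LinePoints

variable [Fintype P]

/-- The set of points on a line, as a finite set. -/
noncomputable def linePoints (P : Type*) {L : Type*} [Membership P L] [Fintype P] (l : L) :
    Finset P :=
  {p | p ∈ l}

@[simp]
theorem mem_linePoints {p : P} {l : L} : p ∈ linePoints P l ↔ p ∈ l := by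
  simp [linePoints]

variable [ProjectivePlane P L]

theorem card_linePoints_inter_of_ne {l m : L} (hlm : l ≠ m) :
    (linePoints P l ∩ linePoints P m).card = 1 := by
  obtain ⟨p, hp, hp_unique⟩ := HasPoints.existsUnique_point P L l m hlm
  refine Finset.card_eq_one.2 ⟨p, Finset.eq_singleton_iff_unique_mem.2 ⟨by simpa using hp, ?_⟩⟩
  exact fun q hq => hp_unique q (by simpa using hq)

variable [Finite L]

theorem card_linePoints (l : L) : (linePoints P l).card = ProjectivePlane.order P L + 1 := by
  rw [← ProjectivePlane.pointCount_eq P l, pointCount, Nat.card_eq_fintype_card,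
    Fintype.card_subtype, linePoints]

theorem linePoints_injective : Function.Injective (linePoints P : L → Finset P) := by
  intro l m hlm
  by_contra hne
  obtain ⟨p, -, hp⟩ := HasPoints.existsUnique_point P L l m hne
  obtain ⟨q, hq, hqp⟩ := (linePoints P l).exists_mem_ne
    (by have := ProjectivePlane.one_lt_order P L; rw [card_linePoints]; lia) p
  exact hqp (hp q ⟨mem_linePoints.1 hq, mem_linePoints.1 (hlm ▸ hq)⟩)

theorem cast_card_linePoints [Semiring R] (horder : (ProjectivePlane.order P L : R) = 0) (l : L) :
    ((linePoints P l).card : R) = 1 := by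
  rw [card_linePoints, Nat.cast_succ, horder, zero_add]

theorem cast_card_linePoints_inter [Semiring R] (horder : (ProjectivePlane.order P L : R) = 0)
    (l m : L) : ((linePoints P l ∩ linePoints P m).card : R) = 1 := by
  rcases eq_or_ne l m with rfl | hlm
  · rw [Finset.inter_self, cast_card_linePoints horder]
  · rw [card_linePoints_inter_of_ne hlm, Nat.cast_one]

theorem sum_linePoints_eq_sum [Semiring R] (horder : (ProjectivePlane.order P L : R) = 0)
    {c : P → R} (hc : c ∈ lineCode R P L) (m : L) : ∑ p ∈ linePoints P m, c p = ∑ p, c p := by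
  induction hc using Submodule.span_induction with
  | mem _ hl =>
    obtain ⟨l, rfl⟩ := hl
    have indicator_eq : ∀ p : P, (if p ∈ l then (1 : R) else 0) =
        if p ∈ linePoints P l then 1 else 0 := fun p => by rw [if_congr mem_linePoints rfl rfl]
    simp only [indicator_eq, Finset.sum_ite_mem, Finset.univ_inter, Finset.sum_const, nsmul_one,
      cast_card_linePoints_inter horder, cast_card_linePoints horder]
  | zero => simp
  | add c d _ _ hc hd => simp only [Pi.add_apply, Finset.sum_add_distrib, hc, hd]
  | smul a c _ hc => simp only [Pi.smul_apply, ← Finset.smul_sum, hc]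

theorem exists_eq_linePoints_of_forall_exists_mem {S : Finset P}
    (hcard : S.card = ProjectivePlane.order P L + 1) (hS : ∀ m : L, ∃ p ∈ S, p ∈ m) :
    ∃ l : L, S = linePoints P l := by
  obtain ⟨p, hp, q, hq, hpq⟩ := Finset.one_lt_card.1
    (by have := ProjectivePlane.one_lt_order P L; lia : 1 < S.card)
  obtain ⟨l, ⟨hpl, hql⟩, -⟩ := HasLines.existsUnique_line P L p q hpq
  refine ⟨l, (Finset.eq_of_subset_of_card_le (fun r hr => ?_)
    (by rw [hcard, card_linePoints])).symm⟩
  by_contra hrS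
  -- Each of the `order + 1` lines through `r` then meets `S` in exactly one point, but the line `l`
  -- through `r` contains both `p` and `q`.
  have hrl : r ∈ l := mem_linePoints.1 hr
  choose s hsS hs using fun m : {m : L // r ∈ m} => hS m
  have s_injective : Function.Injective fun m => (⟨s m, hsS m⟩ : S) := fun m m' hmm' =>
    have hsm : s m = s m' := congrArg Subtype.val hmm'
    have hsm' : s m ∈ m'.1 := hsm ▸ hs m'
    Subtype.ext ((Nondegenerate.eq_or_eq (hs m) m.2 hsm' m'.2).resolve_left
      fun h => hrS (h ▸ hsS m))
  have s_surjective := (s_injective.bijective_of_nat_card_le (by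
    rw [Nat.card_eq_fintype_card, Fintype.card_coe, hcard]
    exact (ProjectivePlane.lineCount_eq L r).ge)).surjective
  have eq_s_l : ∀ t ∈ S, t ∈ l → t = s ⟨l, hrl⟩ := by
    intro t ht htl
    obtain ⟨m, hm⟩ := s_surjective ⟨t, ht⟩
    obtain rfl : s m = t := congrArg Subtype.val hm
    have hml : m.1 = l := (Nondegenerate.eq_or_eq (hs m) m.2 htl hrl).resolve_left
      fun h => hrS (h ▸ ht)
    exact congrArg s (Subtype.ext hml)
  exact hpq ((eq_s_l p hp hpl).trans (eq_s_l q hq hql).symm)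

end LinePoints

variable [Finite P] [Finite L] [ProjectivePlane P L] [Semiring R] [Nontrivial R]

theorem exists_line_preimage_of_mem_codeAut (horder : (ProjectivePlane.order P L : R) = 0)
    {σ : Equiv.Perm P} (hσ : σ ∈ codeAut (lineCode R P L)) (l : L) :
    ∃ m : L, ∀ p, p ∈ m ↔ σ p ∈ l := by
  cases nonempty_fintype P
  set S := (linePoints P l).map σ.symm.toEmbedding with hS
  have mem_S : ∀ p, p ∈ S ↔ σ p ∈ l := by simp [hS]
  have word_mem : (fun p => if σ p ∈ l then (1 : R) else 0) ∈ lineCode R P L :=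
    (hσ _).2 (indicator_mem_lineCode l)
  have S_card : S.card = ProjectivePlane.order P L + 1 := by
    rw [hS, Finset.card_map, card_linePoints]
  have S_blocking : ∀ m : L, ∃ p ∈ S, p ∈ m := by
    intro m
    by_contra! hm
    have sum_eq := sum_linePoints_eq_sum horder word_mem m
    simp only [← mem_S] at sum_eq
    rw [Finset.sum_eq_zero fun p hp => if_neg fun hpS => hm p hpS (mem_linePoints.1 hp)] at sum_eq
    simp [S_card, horder] at sum_eq
  obtain ⟨m, hm⟩ := exists_eq_linePoints_of_forall_exists_mem S_card S_blocking
  exact ⟨m, fun p => by rw [← mem_S, hm, mem_linePoints]⟩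

theorem codeAut_lineCode (horder : (ProjectivePlane.order P L : R) = 0) :
    codeAut (lineCode R P L) = collineationGroup P L := by
  cases nonempty_fintype P
  refine le_antisymm (fun σ hσ => ?_) collineationGroup_le_codeAut
  choose τ hτ using exists_line_preimage_of_mem_codeAut horder hσ
  have τ_injective : Function.Injective τ := fun l m hlm => linePoints_injective (P := P) <| by
    ext p
    simpa [hlm, hτ] using (hτ l (σ.symm p)).symm
  let T : Equiv.Perm L := Equiv.ofBijective τ (Finite.injective_iff_bijective.1 τ_injective)
  exact ⟨T.symm, fun p l => by
    rw [← hτ, show τ (T.symm l) = l from T.apply_symm_apply l]⟩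

end LineCode

section SubspaceOfRank

open Module Configuration

variable {K V : Type*} [DivisionRing K] [AddCommGroup V] [Module K V]

/-- The subspaces of dimension `k` of a vector space. Those with `k = 1` and `k = 2` are the points
and the lines of its projective space. -/
def SubspaceOfRank (K V : Type*) [DivisionRing K] [AddCommGroup V] [Module K V] (k : ℕ) : Type _ :=
  {p : Submodule K V // finrank K p = k}

namespace SubspaceOfRank

instance {k : ℕ} : Membership (SubspaceOfRank K V 1) (SubspaceOfRank K V k) :=
  ⟨fun l p => p.1 ≤ l.1⟩

instance [Finite V] {k : ℕ} : Finite (SubspaceOfRank K V k) :=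
  haveI : Finite (Submodule K V) := .of_injective _ SetLike.coe_injective
  Subtype.finite

theorem mem_def {k : ℕ} {p : SubspaceOfRank K V 1} {l : SubspaceOfRank K V k} :
    p ∈ l ↔ p.1 ≤ l.1 := Iff.rfl

theorem finiteDimensional {k : ℕ} [NeZero k] (p : SubspaceOfRank K V k) :
    FiniteDimensional K p.1 :=
  .of_finrank_pos (p.2.symm ▸ NeZero.pos k)

/-- The point of projective space spanned by a nonzero vector. -/
def mkPoint (K : Type*) {V : Type*} [DivisionRing K] [AddCommGroup V] [Module K V] (v : V)
    (hv : v ≠ 0) : SubspaceOfRank K V 1 :=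
  ⟨K ∙ v, finrank_span_singleton hv⟩

theorem mkPoint_mem_iff {k : ℕ} {v : V} {hv : v ≠ 0} {l : SubspaceOfRank K V k} :
    mkPoint K v hv ∈ l ↔ v ∈ l.1 :=
  Submodule.span_singleton_le_iff_mem v l.1

theorem eq_of_mem {p q : SubspaceOfRank K V 1} (hpq : p ∈ q) : p = q :=
  have := q.finiteDimensional
  Subtype.ext (Submodule.eq_of_le_of_finrank_eq hpq (p.2.trans q.2.symm))

theorem exists_eq_mkPoint (p : SubspaceOfRank K V 1) : ∃ v hv, p = mkPoint K v hv := by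
  have ne_bot : p.1 ≠ ⊥ := fun h => by
    have := p.2
    rw [h, finrank_bot] at this
    lia
  obtain ⟨v, hvp, hv⟩ := p.1.exists_mem_ne_zero_of_ne_bot ne_bot
  exact ⟨v, hv, (eq_of_mem (mkPoint_mem_iff.2 hvp)).symm⟩

theorem finrank_sup_of_ne {p q : SubspaceOfRank K V 1} (hpq : p ≠ q) :
    finrank K ↥(p.1 ⊔ q.1) = 2 := by
  have := p.finiteDimensional
  have := q.finiteDimensional
  have inf_lt : p.1 ⊓ q.1 < p.1 := inf_le_left.lt_of_ne fun h =>
    hpq (eq_of_mem (inf_eq_left.1 h))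
  have inf_rank := Submodule.finrank_lt_finrank_of_lt inf_lt
  have rank_add := Submodule.finrank_sup_add_finrank_inf_eq p.1 q.1
  rw [p.2] at *
  rw [q.2] at rank_add
  lia

theorem eq_sup_of_mem {p q : SubspaceOfRank K V 1} (hpq : p ≠ q) {l : SubspaceOfRank K V 2}
    (hp : p ∈ l) (hq : q ∈ l) : l.1 = p.1 ⊔ q.1 :=
  have := l.finiteDimensional
  (Submodule.eq_of_le_of_finrank_eq (sup_le hp hq) ((finrank_sup_of_ne hpq).trans l.2.symm)).symm

section Plane

variable [hV : Fact (finrank K V = 3)]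

theorem finiteDimensional_of_fact : FiniteDimensional K V :=
  .of_finrank_pos (hV.out ▸ three_pos)

theorem finrank_inf_of_ne {l m : SubspaceOfRank K V 2} (hlm : l ≠ m) :
    finrank K ↥(l.1 ⊓ m.1) = 1 := by
  have := finiteDimensional_of_fact (K := K) (V := V)
  have lt_sup : l.1 < l.1 ⊔ m.1 := le_sup_left.lt_of_ne fun h =>
    hlm (Subtype.ext
      (Submodule.eq_of_le_of_finrank_eq (sup_eq_left.1 h.symm) (m.2.trans l.2.symm)).symm)
  have sup_rank := Submodule.finrank_lt_finrank_of_lt lt_sup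
  have sup_rank_le := (l.1 ⊔ m.1).finrank_le
  have rank_add := Submodule.finrank_sup_add_finrank_inf_eq l.1 m.1
  rw [l.2] at *
  rw [m.2] at rank_add
  rw [hV.out] at sup_rank_le
  lia

/-- The line of a projective plane cut out by a nonzero linear form. -/
def mkLine (f : V →ₗ[K] K) (hf : f ≠ 0) : SubspaceOfRank K V 2 :=
  ⟨f.ker, by
    have := finiteDimensional_of_fact (K := K) (V := V)
    have := Module.Dual.finrank_ker_add_one_of_ne_zero hf
    rw [hV.out] at this
    lia⟩

theorem mkPoint_mem_mkLine {v : V} {hv : v ≠ 0} {f : V →ₗ[K] K} {hf : f ≠ 0} :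
    mkPoint K v hv ∈ mkLine f hf ↔ f v = 0 := mkPoint_mem_iff

theorem exists_config : ∃ (p₁ p₂ p₃ : SubspaceOfRank K V 1) (l₁ l₂ l₃ : SubspaceOfRank K V 2),
    p₁ ∉ l₂ ∧ p₁ ∉ l₃ ∧ p₂ ∉ l₁ ∧ p₂ ∈ l₂ ∧ p₂ ∈ l₃ ∧ p₃ ∉ l₁ ∧ p₃ ∈ l₂ ∧ p₃ ∉ l₃ := by
  have := finiteDimensional_of_fact (K := K) (V := V)
  let b := finBasisOfFinrankEq K V hV.out
  have ne_zero_of_apply {f : V →ₗ[K] K} (i : Fin 3) (hi : f (b i) ≠ 0) : f ≠ 0 := fun h =>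
    hi (by rw [h, LinearMap.zero_apply])
  refine ⟨mkPoint K (b 0) (b.ne_zero 0), mkPoint K (b 1) (b.ne_zero 1),
    mkPoint K (b 2) (b.ne_zero 2), mkLine (b.coord 1 + b.coord 2) (ne_zero_of_apply 1 ?_),
    mkLine (b.coord 0) (ne_zero_of_apply 0 ?_),
    mkLine (b.coord 0 + b.coord 2) (ne_zero_of_apply 0 ?_), ?_⟩
  all_goals simp [mkPoint_mem_mkLine]

noncomputable instance : ProjectivePlane (SubspaceOfRank K V 1) (SubspaceOfRank K V 2) where
  exists_point l := by
    obtain ⟨v, hv⟩ := SetLike.exists_not_mem_of_ne_top l.1 (fun h => by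
      have := l.2
      rw [h, finrank_top, hV.out] at this
      lia) rfl
    exact ⟨mkPoint K v fun h => hv (h ▸ l.1.zero_mem), fun h => hv (mkPoint_mem_iff.1 h)⟩
  exists_line p := by
    obtain ⟨v, hv, rfl⟩ := p.exists_eq_mkPoint
    obtain ⟨f, hfv, -⟩ := Submodule.exists_le_ker_of_notMem (mt (Submodule.mem_bot K).1 hv)
    exact ⟨mkLine f fun h => hfv (by rw [h, LinearMap.zero_apply]), mt mkPoint_mem_mkLine.1 hfv⟩
  eq_or_eq {p q l m} hpl hql hpm hqm := or_iff_not_imp_left.2 fun hpq =>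
    Subtype.ext ((eq_sup_of_mem hpq hpl hql).trans (eq_sup_of_mem hpq hpm hqm).symm)
  mkPoint {l m} hlm := ⟨l.1 ⊓ m.1, finrank_inf_of_ne hlm⟩
  mkPoint_ax _ := ⟨mem_def.2 inf_le_left, mem_def.2 inf_le_right⟩
  mkLine {p q} hpq := ⟨p.1 ⊔ q.1, finrank_sup_of_ne hpq⟩
  mkLine_ax _ := ⟨mem_def.2 le_sup_left, mem_def.2 le_sup_right⟩
  exists_config := exists_config

end Plane

theorem order_eq {K : Type*} [Field K] [Finite K] [Module K V] [hV : Fact (finrank K V = 3)] :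
    ProjectivePlane.order (SubspaceOfRank K V 1) (SubspaceOfRank K V 2) = Nat.card K := by
  have := finiteDimensional_of_fact (K := K) (V := V)
  have : Finite V := Module.finite_of_finite K
  cases nonempty_fintype (SubspaceOfRank K V 1)
  have card_points := ProjectivePlane.card_points (SubspaceOfRank K V 1) (SubspaceOfRank K V 2)
  have card_points' : Nat.card (SubspaceOfRank K V 1) = ∑ i ∈ Finset.range 3, Nat.card K ^ i :=
    (Nat.card_congr (Projectivization.equivSubmodule K V)).symm.trans
      (Projectivization.card_of_finrank K V hV.out)
  rw [Nat.card_eq_fintype_card, card_points] at card_points'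
  simp only [Finset.sum_range_succ, Finset.sum_range_zero] at card_points'
  nlinarith

end SubspaceOfRank

end SubspaceOfRank

section Semilinear

open Submodule

theorem span_singleton_eq_of_mem_of_ne_zero {K V : Type*} [DivisionRing K] [AddCommGroup V]
    [Module K V] {v w : V} (hv : v ∈ K ∙ w) (hv0 : v ≠ 0) : K ∙ v = K ∙ w := by
  obtain ⟨c, rfl⟩ := mem_span_singleton.1 hv
  exact span_singleton_smul_eq (IsUnit.mk0 c (left_ne_zero_of_smul hv0)) w

variable {K K' A V' : Type*} [DivisionRing K'] [AddCommGroup A] [AddCommGroup V'] [Module K' V']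

theorem eq_smul_of_forall_mem_span {f h : A →+ V'} (hh : ∀ x, h x ∈ K' ∙ f x) {x y : A} {c : K'}
    (hy : h y = c • f y) (hxy : f y ∉ K' ∙ f x) : h x = c • f x := by
  obtain ⟨d, hd⟩ := mem_span_singleton.1 (hh (x + y))
  obtain ⟨e, he⟩ := mem_span_singleton.1 (hh x)
  have key : (d - c) • f y = (e - d) • f x := by
    rw [sub_smul, sub_smul, sub_eq_sub_iff_add_eq_add, add_comm (d • f y), ← smul_add, ← map_add,
      hd, map_add, ← he, hy]
  have hdc : d = c := by
    by_contra hne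
    refine hxy (mem_span_singleton.2 ⟨(d - c)⁻¹ * (e - d), ?_⟩)
    rw [mul_smul, ← key, inv_smul_smul₀ (sub_ne_zero.2 hne)]
  rw [hdc, sub_self, zero_smul, eq_comm, sub_smul, sub_eq_zero] at key
  rw [← he, key]

theorem exists_eq_smul_of_forall_mem_span {f h : A →+ V'} (hh : ∀ x, h x ∈ K' ∙ f x)
    (hf : ∀ x, ∃ z, f z ∉ K' ∙ f x) : ∃ c : K', ∀ x, h x = c • f x := by
  obtain ⟨y, hy⟩ := hf 0
  have hy0 : f y ≠ 0 := fun h0 => hy (h0 ▸ zero_mem _)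
  obtain ⟨c, hc⟩ := mem_span_singleton.1 (hh y)
  refine ⟨c, fun x => ?_⟩
  by_cases hyx : f y ∈ K' ∙ f x
  · obtain ⟨z, hz⟩ := hf x
    obtain ⟨d, hd⟩ := mem_span_singleton.1 (hh z)
    have hx : h x = d • f x := eq_smul_of_forall_mem_span hh hd.symm hz
    have hy : h y = d • f y := eq_smul_of_forall_mem_span hh hd.symm
      (by rwa [span_singleton_eq_of_mem_of_ne_zero hyx hy0])
    rw [hx, smul_left_injective K' hy0 (hy.symm.trans hc.symm)]
  · exact eq_smul_of_forall_mem_span hh hc.symm hyx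

theorem exists_ringHom_map_smul [Ring K] [Module K A] {f : A →+ V'}
    (hsmul : ∀ (c : K) x, f (c • x) ∈ K' ∙ f x) (hf : ∀ x, ∃ z, f z ∉ K' ∙ f x) :
    ∃ φ : K →+* K', ∀ c x, f (c • x) = φ c • f x := by
  choose φ hφ using fun c : K => exists_eq_smul_of_forall_mem_span
    (h := f.comp (DistribSMul.toAddMonoidHom A c)) (hsmul c) hf
  replace hφ : ∀ c x, f (c • x) = φ c • f x := hφ
  obtain ⟨y, hy⟩ := hf 0
  have hy0 : f y ≠ 0 := fun h0 => hy (h0 ▸ zero_mem _)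
  have smul_injective := smul_left_injective K' hy0
  refine ⟨⟨⟨⟨φ, smul_injective ?_⟩, fun c d => smul_injective ?_⟩, smul_injective ?_,
    fun c d => smul_injective ?_⟩, hφ⟩
  · simp [← hφ]
  · simp [mul_smul, ← hφ]
  · simp [← hφ]
  · simp [add_smul, ← hφ]

end Semilinear

section FundamentalTheorem

open Submodule

variable {K K' V V' : Type*} [DivisionRing K] [AddCommGroup V] [Module K V]
  [DivisionRing K'] [AddCommGroup V'] [Module K' V']

theorem sub_mem_span_singleton_of_notMem_span_pair {b u v w : V} (hb : b ∉ span K {u, v})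
    (hw : w ∈ span K {u, v}) (hbw : b + w ∈ span K {b + u, v}) : w - u ∈ K ∙ v := by
  obtain ⟨c, d, hcd⟩ := mem_span_pair.1 hbw
  have hu : u ∈ span K {u, v} := subset_span (by simp)
  have hv : v ∈ span K {u, v} := subset_span (by simp)
  have smul_b : (1 - c) • b = c • u + d • v - w := by
    rw [sub_smul, one_smul, sub_eq_sub_iff_add_eq_add, ← hcd, smul_add]
    abel
  have hc : c = 1 := by
    by_contra hne
    refine hb (((span K {u, v}).smul_mem_iff (sub_ne_zero.2 (Ne.symm hne))).1 ?_)
    rw [smul_b]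
    exact sub_mem (add_mem (smul_mem _ _ hu) (smul_mem _ _ hv)) hw
  rw [hc, sub_self, zero_smul, one_smul, eq_comm, sub_eq_zero] at smul_b
  exact mem_span_singleton.2 ⟨d, by rw [← smul_b, add_sub_cancel_left]⟩

theorem eq_add_of_notMem_span_pair {b u v w : V} (hb : b ∉ span K {u, v}) (huv : v ∉ K ∙ u)
    (hw : w ∈ span K {u, v}) (hu : b + w ∈ span K {b + u, v}) (hv : b + w ∈ span K {b + v, u}) :
    w = u + v := by
  obtain ⟨c, hc⟩ := mem_span_singleton.1 (sub_mem_span_singleton_of_notMem_span_pair hb hw hu)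
  rw [Set.pair_comm] at hb hw
  obtain ⟨d, hd⟩ := mem_span_singleton.1 (sub_mem_span_singleton_of_notMem_span_pair hb hw hv)
  have key : (c - 1) • v = (d - 1) • u := by
    rw [sub_smul, sub_smul, hc, hd]
    simp only [one_smul]
    abel
  have hc1 : c = 1 := by
    by_contra hne
    exact huv (((K ∙ u).smul_mem_iff (sub_ne_zero.2 hne)).1
      (key ▸ smul_mem _ _ (mem_span_singleton_self u)))
  rw [hc1, one_smul] at hc
  rw [hc, add_sub_cancel]

theorem exists_notMem_span {S : Set V} (hS : Cardinal.mk S < Module.rank K V) :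
    ∃ v, v ∉ span K S := by
  by_contra! h
  refine hS.not_ge ?_
  rw [← rank_top K V, ← eq_top_iff'.2 h]
  exact rank_span_le S

theorem exists_notMem_span_pair (hV : 2 < Module.rank K V) (x y : V) :
    ∃ v, v ∉ span K {x, y} :=
  exists_notMem_span <| lt_of_le_of_lt
    (Cardinal.mk_insert_le.trans (by simp [one_add_one_eq_two])) hV

theorem notMem_span_pair_of_mem_ker {a : V} {l : V →ₗ[K] K} (hla : l a = 1) (x y : l.ker) :
    a ∉ span K {(x : V), (y : V)} := by
  intro ha
  have : span K {(x : V), (y : V)} ≤ l.ker := span_le.2 (by simp [Set.insert_subset_iff])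
  simp [LinearMap.mem_ker.1 (this ha)] at hla

/-- A map between vector spaces that represents a collineation of their projective spaces: it
induces a surjection of the points that preserves and reflects collinearity. Allowing equal and zero
arguments in the collinearity condition makes the induced map of points well defined and
injective. -/
structure IsProjectiveCollineation (K K' : Type*) {V V' : Type*} [DivisionRing K] [AddCommGroup V]
    [Module K V] [DivisionRing K'] [AddCommGroup V'] [Module K' V'] (s : V → V') : Prop where
  map_zero : s 0 = 0
  mem_span_pair_iff : ∀ x y z, s z ∈ span K' {s x, s y} ↔ z ∈ span K {x, y}
  exists_mem_span : ∀ v' : V', ∃ v, v' ∈ K' ∙ s v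

namespace IsProjectiveCollineation

variable {s : V → V'}

theorem mem_span_singleton_iff (hs : IsProjectiveCollineation K K' s)
    {x z : V} : s z ∈ K' ∙ s x ↔ z ∈ K ∙ x := by
  simpa using hs.mem_span_pair_iff x x z

theorem map_eq_zero_iff (hs : IsProjectiveCollineation K K' s) {x : V} : s x = 0 ↔ x = 0 := by
  simpa [hs.map_zero] using hs.mem_span_singleton_iff (x := 0) (z := x)

theorem span_map_eq_of_span_eq (hs : IsProjectiveCollineation K K' s)
    {x y : V} (hxy : K ∙ x = K ∙ y) : K' ∙ s x = K' ∙ s y :=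
  le_antisymm
    ((span_singleton_le_iff_mem _ _).2
      (hs.mem_span_singleton_iff.2 (hxy ▸ mem_span_singleton_self x)))
    ((span_singleton_le_iff_mem _ _).2
      (hs.mem_span_singleton_iff.2 (hxy ▸ mem_span_singleton_self y)))

theorem mem_span_pair_iff_of_span_eq (hs : IsProjectiveCollineation K K' s)
    {x y z : V} {u v w : V'} (hu : K' ∙ u = K' ∙ s x)
    (hv : K' ∙ v = K' ∙ s y) (hw : K' ∙ w = K' ∙ s z) :
    w ∈ span K' {u, v} ↔ z ∈ span K {x, y} := by
  rw [← hs.mem_span_pair_iff, ← span_singleton_le_iff_mem, hw, span_singleton_le_iff_mem,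
    span_insert, hu, hv, ← span_insert]

theorem of_span_eq (hs : IsProjectiveCollineation K K' s)
    {g : V → V'} (hg : ∀ v, K' ∙ g v = K' ∙ s v) :
    IsProjectiveCollineation K K' g where
  map_zero := by simpa [hs.map_zero] using hg 0
  mem_span_pair_iff x y z := hs.mem_span_pair_iff_of_span_eq (hg x) (hg y) (hg z)
  exists_mem_span v' := by simpa only [hg] using hs.exists_mem_span v'

theorem exists_add_mem_span (hs : IsProjectiveCollineation K K' s) {a x : V} (hax : a ∉ K ∙ x) :
    ∃ y ∈ K' ∙ s x, s a + y ∈ K' ∙ s (a + x) := by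
  have mem_pair : a + x ∈ span K {a, x} :=
    add_mem (subset_span (by simp)) (subset_span (by simp))
  obtain ⟨c, d, hcd⟩ := mem_span_pair.1 ((hs.mem_span_pair_iff a x (a + x)).2 mem_pair)
  have hc : c ≠ 0 := by
    rintro rfl
    have : a + x ∈ K ∙ x := hs.mem_span_singleton_iff.1
      (mem_span_singleton.2 ⟨d, by simpa using hcd⟩)
    exact hax (((K ∙ x).add_mem_iff_left (mem_span_singleton_self x)).1 this)
  refine ⟨c⁻¹ • d • s x, smul_mem _ _ (smul_mem _ _ (mem_span_singleton_self _)),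
    mem_span_singleton.2 ⟨c⁻¹, ?_⟩⟩
  rw [← hcd, smul_add, inv_smul_smul₀ hc]

section AffineChart

/-! In the affine chart `a + ker l`, requiring that `s a + f x` represent `a + x` and that `f x`
represent `x` determines `f` on `ker l`. The point `a + (x + y)` lies on the line through `a + x`
and `y` and on the line through `a + y` and `x`, which forces `f` to be additive. -/

variable {a : V} {l : V →ₗ[K] K} {f : l.ker → V'}

theorem span_eq_of_add_mem_span (hs : IsProjectiveCollineation K K' s)
    (hla : l a = 1) {x : l.ker} {y : V'} (hy : y ∈ K' ∙ s x)
    (hay : s a + y ∈ K' ∙ s (a + x)) : K' ∙ y = K' ∙ s x := by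
  by_cases hy0 : y = 0
  · have : a ∈ K ∙ (a + x : V) := hs.mem_span_singleton_iff.1 (by simpa [hy0] using hay)
    obtain ⟨c, hc⟩ := mem_span_singleton.1 this
    obtain rfl : c = 1 := by simpa [hla] using congrArg l hc
    have hx0 : (x : V) = 0 := by simpa using hc
    rw [hy0, hx0, hs.map_zero]
  · exact span_singleton_eq_of_mem_of_ne_zero hy hy0

theorem span_add_eq_of_add_mem_span (hs : IsProjectiveCollineation K K' s)
    (hla : l a = 1) {x : l.ker} {y : V'} (hy : y ∈ K' ∙ s x)
    (hay : s a + y ∈ K' ∙ s (a + x)) : K' ∙ (s a + y) = K' ∙ s (a + x) := by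
  refine span_singleton_eq_of_mem_of_ne_zero hay fun h => ?_
  have : a ∈ K ∙ (x : V) := hs.mem_span_singleton_iff.1
    (eq_neg_of_add_eq_zero_left h ▸ neg_mem hy)
  exact notMem_span_pair_of_mem_ker hla x x (by simpa using this)

theorem chart_add_of_notMem_span (hs : IsProjectiveCollineation K K' s)
    (hla : l a = 1) (hf : ∀ x, K' ∙ f x = K' ∙ s x)
    (hfa : ∀ x, K' ∙ (s a + f x) = K' ∙ s (a + x)) {x y : l.ker} (hxy : (y : V) ∉ K ∙ (x : V)) :
    f (x + y) = f x + f y := by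
  have mem_iff {u v w : l.ker} : f w ∈ span K' {f u, f v} ↔ (w : V) ∈ span K {(u : V), (v : V)} :=
    hs.mem_span_pair_iff_of_span_eq (hf u) (hf v) (hf w)
  have chart_add_mem {u v : l.ker} : s a + f (u + v) ∈ span K' {s a + f u, f v} := by
    rw [hs.mem_span_pair_iff_of_span_eq (hfa u) (hf v) (hfa (u + v)), mem_span_pair]
    exact ⟨1, 1, by simp [add_assoc]⟩
  refine eq_add_of_notMem_span_pair (K := K') (b := s a) ?_ ?_ ?_ chart_add_mem ?_
  · rw [hs.mem_span_pair_iff_of_span_eq (hf x) (hf y) rfl]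
    exact notMem_span_pair_of_mem_ker hla x y
  · rwa [← Set.pair_eq_singleton, mem_iff, Set.pair_eq_singleton]
  · exact mem_iff.2 (mem_span_pair.2 ⟨1, 1, by simp⟩)
  · rw [add_comm x y]
    exact chart_add_mem

theorem chart_add (hs : IsProjectiveCollineation K K' s)
    (hla : l a = 1) (hf : ∀ x, K' ∙ f x = K' ∙ s x)
    (hfa : ∀ x, K' ∙ (s a + f x) = K' ∙ s (a + x))
    (hl : ∀ x : l.ker, ∃ z : l.ker, (z : V) ∉ K ∙ (x : V)) (x y : l.ker) :
    f (x + y) = f x + f y := by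
  by_cases hxy : (y : V) ∈ K ∙ (x : V)
  · obtain ⟨z, hz⟩ := hl x
    have notMem {u : l.ker} (hu : (u : V) ∈ K ∙ (x : V)) : (z : V) ∉ K ∙ (u : V) := fun h =>
      hz ((span_singleton_le_iff_mem _ _).2 hu h)
    have hx_yz : ((y + z : l.ker) : V) ∉ K ∙ (x : V) := fun h =>
      hz (((K ∙ (x : V)).add_mem_iff_right hxy).1 h)
    refine add_right_cancel (b := f z) ?_
    calc f (x + y) + f z = f (x + y + z) := (hs.chart_add_of_notMem_span hla hf hfa
          (notMem (add_mem (mem_span_singleton_self (x : V)) hxy))).symm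
      _ = f x + f (y + z) := by rw [add_assoc, hs.chart_add_of_notMem_span hla hf hfa hx_yz]
      _ = f x + f y + f z := by
        rw [hs.chart_add_of_notMem_span hla hf hfa (notMem hxy), add_assoc]
  · exact hs.chart_add_of_notMem_span hla hf hfa hxy

theorem exists_chart (hs : IsProjectiveCollineation K K' s)
    (hla : l a = 1) (hl : ∀ x : l.ker, ∃ z : l.ker, (z : V) ∉ K ∙ (x : V)) :
    ∃ f : l.ker →+ V',
      (∀ x, K' ∙ f x = K' ∙ s x) ∧ ∀ x, K' ∙ (s a + f x) = K' ∙ s (a + x) := by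
  have notMem (x : l.ker) : a ∉ K ∙ (x : V) := by simpa using notMem_span_pair_of_mem_ker hla x x
  choose f hf hfa using fun x : l.ker => hs.exists_add_mem_span (notMem x)
  have hf' (x) := hs.span_eq_of_add_mem_span hla (hf x) (hfa x)
  have hfa' (x) := hs.span_add_eq_of_add_mem_span hla (hf x) (hfa x)
  exact ⟨AddMonoidHom.mk' f (hs.chart_add hla hf' hfa' hl), hf', hfa'⟩

theorem span_smul_add_eq (hs : IsProjectiveCollineation K K' s)
    {φ : K →+* K'} {f : l.ker →ₛₗ[φ] V'} (hf : ∀ x, K' ∙ f x = K' ∙ s x)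
    (hfa : ∀ x, K' ∙ (s a + f x) = K' ∙ s (a + x)) (c : K) (x : l.ker) :
    K' ∙ (φ c • s a + f x) = K' ∙ s (c • a + x) := by
  rcases eq_or_ne c 0 with rfl | hc
  · simpa using hf x
  have hc' : IsUnit c := IsUnit.mk0 c hc
  calc K' ∙ (φ c • s a + f x) = K' ∙ (φ c • (s a + f (c⁻¹ • x))) := by
        rw [smul_add, ← map_smulₛₗ, smul_inv_smul₀ hc]
    _ = K' ∙ s (a + c⁻¹ • x) := by
        rw [span_singleton_smul_eq (hc'.map φ), hfa, coe_smul]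
    _ = K' ∙ s (c • a + x) := hs.span_map_eq_of_span_eq (by
        rw [← span_singleton_smul_eq hc', smul_add, smul_inv_smul₀ hc])

theorem exists_semilinearMap_of_ker (hs : IsProjectiveCollineation K K' s) (hla : l a = 1)
    (hl : ∀ x : l.ker, ∃ z : l.ker, (z : V) ∉ K ∙ (x : V)) :
    ∃ (φ : K →+* K') (g : V →ₛₗ[φ] V'), ∀ v, K' ∙ g v = K' ∙ s v := by
  obtain ⟨f, hf, hfa⟩ := hs.exists_chart hla hl
  have f_mem_iff {x z : l.ker} : f z ∈ K' ∙ f x ↔ (z : V) ∈ K ∙ (x : V) := by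
    simpa using hs.mem_span_pair_iff_of_span_eq (hf x) (hf x) (hf z)
  obtain ⟨φ, hφ⟩ := exists_ringHom_map_smul (K := K) (K' := K') (f := f)
    (fun c x => f_mem_iff.2 (mem_span_singleton.2 ⟨c, rfl⟩))
    (fun x => (hl x).imp fun z hz => mt f_mem_iff.1 hz)
  let F : l.ker →ₛₗ[φ] V' := { f with map_smul' := hφ }
  let proj : V →ₗ[K] l.ker :=
    (LinearMap.id - LinearMap.toSpanSingleton K V a ∘ₗ l).codRestrict l.ker (by simp [hla])
  have decomp (v : V) : l v • a + proj v = v := by simp [proj]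
  refine ⟨φ, ⟨⟨fun v => φ (l v) • s a + F (proj v), fun v w => ?_⟩, fun c v => ?_⟩, fun v => ?_⟩
  · simp only [map_add, add_smul]
    abel
  · simp [mul_smul]
  · simpa [decomp] using hs.span_smul_add_eq (f := F) hf hfa (l v) (proj v)

end AffineChart

theorem exists_semilinearMap (hs : IsProjectiveCollineation K K' s) (hV : 2 < Module.rank K V) :
    ∃ (φ : K →+* K') (g : V →ₛₗ[φ] V'), ∀ v, K' ∙ g v = K' ∙ s v := by
  have : Nontrivial V := rank_pos_iff_nontrivial.1 (zero_le_two.trans_lt hV)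
  obtain ⟨a, ha⟩ := exists_ne (0 : V)
  obtain ⟨l, hla⟩ : ∃ l : V →ₗ[K] K, l a = 1 :=
    (LinearMap.exists_extend_of_notMem (0 : (⊥ : Submodule K V) →ₗ[K] K)
      (mt (mem_bot K).1 ha) 1).imp fun _ => And.right
  refine hs.exists_semilinearMap_of_ker hla fun x => ?_
  obtain ⟨v, hv⟩ := exists_notMem_span_pair hV a x
  refine ⟨⟨v - l v • a, by simp [hla]⟩, fun h => hv ?_⟩
  rw [← sub_add_cancel v (l v • a), add_comm]
  exact add_mem (smul_mem _ _ (subset_span (by simp)))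
    (span_mono (by simp) h)

theorem surjective_of_semilinearMap {φ : K →+* K'} {g : V →ₛₗ[φ] V'}
    (hg : IsProjectiveCollineation K K' g) {a x : V} (hx : x ≠ 0) (ha : a ∉ K ∙ x) :
    Function.Surjective φ := by
  intro c
  have ga_notMem : g a ∉ K' ∙ g x := mt hg.mem_span_singleton_iff.1 ha
  obtain ⟨v, hv⟩ := hg.exists_mem_span (g a + c • g x)
  have span_eq : K' ∙ (g a + c • g x) = K' ∙ g v := span_singleton_eq_of_mem_of_ne_zero hv
    fun h => ga_notMem (mem_span_singleton.2 ⟨-c, by rw [neg_smul, eq_neg_of_add_eq_zero_left h]⟩)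
  obtain ⟨α, β, rfl⟩ := mem_span_pair.1 ((hg.mem_span_pair_iff_of_span_eq rfl rfl span_eq).1
    (mem_span_pair.2 ⟨1, c, by rw [one_smul]⟩))
  obtain ⟨d, hd⟩ := mem_span_singleton.1 hv
  have key : (d * φ α - 1) • g a = (c - d * φ β) • g x := by
    rw [sub_smul, sub_smul, sub_eq_sub_iff_add_eq_add, mul_smul, mul_smul, ← smul_add, one_smul,
      add_comm (c • g x), ← hd, map_add, map_smulₛₗ, map_smulₛₗ]
  have hdα : d * φ α = 1 := by
    by_contra hne
    exact ga_notMem (((K' ∙ g x).smul_mem_iff (sub_ne_zero.2 hne)).1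
      (key ▸ smul_mem _ _ (mem_span_singleton_self _)))
  have hdβ : d * φ β = c := by
    rw [hdα, sub_self, zero_smul, eq_comm, smul_eq_zero_iff_left (mt hg.map_eq_zero_iff.1 hx),
      sub_eq_zero] at key
    exact key.symm
  exact ⟨α⁻¹ * β, by rw [map_mul, map_inv₀, ← hdβ, eq_inv_of_mul_eq_one_left hdα]⟩

/-- The fundamental theorem of (hs : IsProjectiveCollineation K K' s) projective geometry. -/
theorem exists_semilinearEquiv (hs : IsProjectiveCollineation K K' s) (hV : 2 < Module.rank K V) :
    ∃ (φ : K ≃+* K') (g : V ≃+ V'), (∀ (c : K) v, g (c • v) = φ c • g v) ∧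
      ∀ v, K' ∙ g v = K' ∙ s v := by
  obtain ⟨φ, g, hgs⟩ := hs.exists_semilinearMap hV
  have hg := hs.of_span_eq hgs
  have : Nontrivial V := rank_pos_iff_nontrivial.1 (zero_le_two.trans_lt hV)
  obtain ⟨x, hx⟩ := exists_ne (0 : V)
  obtain ⟨a, ha⟩ := exists_notMem_span_pair hV x x
  have φ_surjective := surjective_of_semilinearMap hg hx (by simpa using ha)
  have g_injective : Function.Injective g :=
    (injective_iff_map_eq_zero g).2 fun _ => hg.map_eq_zero_iff.1
  have g_surjective : Function.Surjective g := fun v' => by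
    obtain ⟨v, hv⟩ := hg.exists_mem_span v'
    obtain ⟨c, rfl⟩ := mem_span_singleton.1 hv
    obtain ⟨c, rfl⟩ := φ_surjective c
    exact ⟨c • v, map_smulₛₗ g c v⟩
  exact ⟨RingEquiv.ofBijective φ ⟨φ.injective, φ_surjective⟩,
    AddEquiv.ofBijective g ⟨g_injective, g_surjective⟩, map_smulₛₗ g, hgs⟩

end IsProjectiveCollineation

end FundamentalTheorem

section GammaL

open Module

variable {K V : Type*} [DivisionRing K] [AddCommGroup V] [Module K V]

/-- The group `ΓL(V)` of invertible semilinear transformations of a vector space. -/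
def gammaL (K V : Type*) [DivisionRing K] [AddCommGroup V] [Module K V] :
    Subgroup (Equiv.Perm V) where
  carrier := {g | (∀ x y, g (x + y) = g x + g y) ∧
    ∃ φ : K ≃+* K, ∀ (c : K) x, g (c • x) = φ c • g x}
  one_mem' := ⟨fun _ _ => rfl, 1, fun _ _ => rfl⟩
  mul_mem' := by
    rintro g h ⟨hg, φ, hφ⟩ ⟨hh, ψ, hψ⟩
    exact ⟨fun x y => by simp [hg, hh], φ * ψ, fun c x => by simp [hφ, hψ]⟩
  inv_mem' := by
    rintro g ⟨hg, φ, hφ⟩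
    exact ⟨fun x y => g.injective (by simp [hg]), φ⁻¹, fun c x => g.injective (by simp [hφ])⟩

namespace gammaL

/-- The additive automorphism underlying a semilinear transformation. -/
def toAddEquiv (g : gammaL K V) : V ≃+ V := AddEquiv.mk' g.1 g.2.1

theorem smul_mem_image (g : gammaL K V) (p : Submodule K V) (c : K) {x : V} (hx : x ∈ g.1 '' p) :
    c • x ∈ g.1 '' p := by
  obtain ⟨φ, hφ⟩ := g.2.2
  obtain ⟨y, hy, rfl⟩ := hx
  exact ⟨φ.symm c • y, p.smul_mem _ hy, by simp [hφ]⟩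

/-- The image of a subspace under a semilinear transformation. -/
def map (g : gammaL K V) (p : Submodule K V) : Submodule K V :=
  { p.toAddSubmonoid.map (toAddEquiv g) with smul_mem' := fun c _ => smul_mem_image g p c }

theorem map_le_map_iff (g : gammaL K V) {p q : Submodule K V} : map g p ≤ map g q ↔ p ≤ q :=
  Set.image_subset_image_iff g.1.injective

theorem finrank_map (g : gammaL K V) (p : Submodule K V) : finrank K (map g p) = finrank K p := by
  obtain ⟨φ, hφ⟩ := g.2.2
  let e : p ≃+ map g p :=
    { g.1.image p with map_add' := fun x y => Subtype.ext (g.2.1 x.1 y.1) }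
  exact congrArg Cardinal.toNat
    (rank_eq_of_equiv_equiv φ e φ.bijective fun c x => Subtype.ext (hφ c x)).symm

instance {k : ℕ} : MulAction (gammaL K V) (SubspaceOfRank K V k) where
  smul g p := ⟨map g p.1, (finrank_map g p.1).trans p.2⟩
  one_smul _ := Subtype.ext (SetLike.coe_injective (Set.image_id _))
  mul_smul g h _ := Subtype.ext (SetLike.coe_injective (Set.image_comp g.1 h.1 _))

theorem smul_mkPoint (g : gammaL K V) (v : V) (hv : v ≠ 0) :
    g • SubspaceOfRank.mkPoint K v hv =
      SubspaceOfRank.mkPoint K (g.1 v) ((toAddEquiv g).map_ne_zero_iff.2 hv) :=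
  have : g.1 v ∈ map g (K ∙ v) := ⟨v, Submodule.mem_span_singleton_self v, rfl⟩
  (SubspaceOfRank.eq_of_mem (SubspaceOfRank.mkPoint_mem_iff.2 this)).symm

theorem range_toPermHom_le_collineationGroup :
    (MulAction.toPermHom (gammaL K V) (SubspaceOfRank K V 1)).range ≤
      collineationGroup (SubspaceOfRank K V 1) (SubspaceOfRank K V 2) := by
  rintro _ ⟨g, rfl⟩
  exact ⟨MulAction.toPerm g, fun _ _ => map_le_map_iff g⟩

end gammaL

section Collineation

open SubspaceOfRank

theorem apply_le_sup_iff_of_mem_collineationGroup {σ : Equiv.Perm (SubspaceOfRank K V 1)}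
    (hσ : σ ∈ collineationGroup (SubspaceOfRank K V 1) (SubspaceOfRank K V 2))
    (p q r : SubspaceOfRank K V 1) : (σ r).1 ≤ (σ p).1 ⊔ (σ q).1 ↔ r.1 ≤ p.1 ⊔ q.1 := by
  obtain ⟨τ, hτ⟩ := hσ
  rcases eq_or_ne p q with rfl | hpq
  · have le_iff {r p : SubspaceOfRank K V 1} : r.1 ≤ p.1 ↔ r = p :=
      ⟨eq_of_mem, fun h => (congrArg Subtype.val h).le⟩
    rw [sup_idem, sup_idem, le_iff, le_iff, σ.apply_eq_iff_eq]
  · let l : SubspaceOfRank K V 2 := ⟨p.1 ⊔ q.1, finrank_sup_of_ne hpq⟩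
    have hτl : (τ l).1 = (σ p).1 ⊔ (σ q).1 := eq_sup_of_mem (σ.injective.ne hpq)
      ((hτ p l).2 (mem_def.2 le_sup_left)) ((hτ q l).2 (mem_def.2 le_sup_right))
    rw [← hτl]
    exact hτ r l

theorem mem_span_pair_iff_of_apply_eq_span {σ : Equiv.Perm (SubspaceOfRank K V 1)}
    (hσ : σ ∈ collineationGroup (SubspaceOfRank K V 1) (SubspaceOfRank K V 2)) {s : V → V}
    (hs₀ : s 0 = 0) (hs : ∀ v hv, (σ (mkPoint K v hv)).1 = K ∙ s v) (x y z : V) :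
    s z ∈ Submodule.span K {s x, s y} ↔ z ∈ Submodule.span K {x, y} := by
  rcases eq_or_ne z 0 with rfl | hz
  · simp [hs₀]
  have mem_iff {x y : V} (hx : x ≠ 0) (hy : y ≠ 0) :
      s z ∈ Submodule.span K {s x, s y} ↔ z ∈ Submodule.span K {x, y} := by
    rw [← Submodule.span_singleton_le_iff_mem z, ← Submodule.span_singleton_le_iff_mem (s z),
      Submodule.span_insert, Submodule.span_insert, ← hs x hx, ← hs y hy, ← hs z hz]
    exact apply_le_sup_iff_of_mem_collineationGroup hσ _ _ _
  have s_ne_zero : s z ≠ 0 := fun h => by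
    have := (σ (mkPoint K z hz)).2
    rw [hs, h, Submodule.span_zero_singleton, finrank_bot] at this
    lia
  rcases eq_or_ne x 0 with rfl | hx <;> rcases eq_or_ne y 0 with rfl | hy
  · simp [hs₀, hz, s_ne_zero]
  · simpa [hs₀] using mem_iff hy hy
  · simpa [hs₀, Set.pair_comm _ (0 : V)] using mem_iff hx hx
  · exact mem_iff hx hy

theorem exists_isProjectiveCollineation {σ : Equiv.Perm (SubspaceOfRank K V 1)}
    (hσ : σ ∈ collineationGroup (SubspaceOfRank K V 1) (SubspaceOfRank K V 2)) :
    ∃ s : V → V, IsProjectiveCollineation K K s ∧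
      ∀ v hv, (σ (mkPoint K v hv)).1 = K ∙ s v := by
  choose rep rep_ne_zero eq_mkPoint using exists_eq_mkPoint (K := K) (V := V)
  let s : V → V := fun v => if hv : v = 0 then 0 else rep (σ (mkPoint K v hv))
  have s_zero : s 0 = 0 := dif_pos rfl
  have span_s (v : V) (hv : v ≠ 0) : (σ (mkPoint K v hv)).1 = K ∙ s v := by
    simp only [s, dif_neg hv]
    exact congrArg Subtype.val (eq_mkPoint _)
  refine ⟨s, ⟨s_zero, fun x y z => ?_, fun v' => ?_⟩, span_s⟩
  · exact mem_span_pair_iff_of_apply_eq_span hσ s_zero span_s x y z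
  · rcases eq_or_ne v' 0 with rfl | hv'
    · exact ⟨0, zero_mem _⟩
    obtain ⟨v, hv, hσv⟩ := (σ.symm (mkPoint K v' hv')).exists_eq_mkPoint
    refine ⟨v, ?_⟩
    rw [← span_s v hv, ← hσv, σ.apply_symm_apply]
    exact Submodule.mem_span_singleton_self v'

theorem collineationGroup_eq_range_toPermHom (hV : 2 < Module.rank K V) :
    collineationGroup (SubspaceOfRank K V 1) (SubspaceOfRank K V 2) =
      (MulAction.toPermHom (gammaL K V) (SubspaceOfRank K V 1)).range := by
  refine le_antisymm (fun σ hσ => ?_) gammaL.range_toPermHom_le_collineationGroup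
  obtain ⟨s, hs, hσs⟩ := exists_isProjectiveCollineation hσ
  obtain ⟨φ, g, hφ, hgs⟩ := hs.exists_semilinearEquiv hV
  refine ⟨⟨g, map_add g, φ, hφ⟩, Equiv.ext fun p => ?_⟩
  obtain ⟨v, hv, rfl⟩ := p.exists_eq_mkPoint
  refine (gammaL.smul_mkPoint _ v hv).trans (Subtype.ext ?_)
  rw [hσs, ← hgs]
  rfl

end Collineation

end GammaL

section Card

open Module

variable {K V : Type*} [DivisionRing K] [AddCommGroup V] [Module K V]

namespace gammaL

/-- The homotheties, as a homomorphism from the scalars to the semilinear transformations. Over a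
noncommutative division ring the homothety by `u` is semilinear for conjugation by `u`. -/
def homothety (K V : Type*) [DivisionRing K] [AddCommGroup V] [Module K V] : Kˣ →* gammaL K V :=
  (MulAction.toPermHom Kˣ V).codRestrict (gammaL K V) fun u =>
    ⟨smul_add u, MulSemiringAction.toRingEquiv _ K (ConjAct.toConjAct u), fun c x => by
      simp [ConjAct.units_smul_def, Units.smul_def, mul_smul]⟩

theorem homothety_injective [Nontrivial V] : Function.Injective (homothety K V) := fun u v h => by
  obtain ⟨x, hx⟩ := exists_ne (0 : V)
  have : (u : K) • x = (v : K) • x := congrArg (fun g : gammaL K V => g.1 x) h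
  exact Units.ext (smul_left_injective K hx this)

theorem ker_toPermHom (hV : 1 < Module.rank K V) :
    (MulAction.toPermHom (gammaL K V) (SubspaceOfRank K V 1)).ker = (homothety K V).range := by
  have smul_mkPoint_eq_iff {g : gammaL K V} {v : V} {hv : v ≠ 0} :
      g • SubspaceOfRank.mkPoint K v hv = SubspaceOfRank.mkPoint K v hv ↔ g.1 v ∈ K ∙ v := by
    rw [smul_mkPoint]
    exact ⟨fun h => SubspaceOfRank.mkPoint_mem_iff.1 (congrArg Subtype.val h).le,
      fun h => SubspaceOfRank.eq_of_mem (SubspaceOfRank.mkPoint_mem_iff.2 h)⟩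
  refine le_antisymm (fun g hg => ?_) ?_
  · have apply_mem (v : V) : toAddEquiv g v ∈ K ∙ v := by
      rcases eq_or_ne v 0 with rfl | hv
      · simp
      · exact smul_mkPoint_eq_iff.1 (Equiv.congr_fun hg (SubspaceOfRank.mkPoint K v hv))
    obtain ⟨c, hc⟩ := exists_eq_smul_of_forall_mem_span (f := AddMonoidHom.id V)
      (h := (toAddEquiv g).toAddMonoidHom) apply_mem fun x => exists_notMem_span (by simpa using hV)
    have : Nontrivial V := rank_pos_iff_nontrivial.1 (zero_le_one.trans_lt hV)
    obtain ⟨x, hx⟩ := exists_ne (0 : V)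
    have c_ne_zero : c ≠ 0 := by
      rintro rfl
      exact (toAddEquiv g).map_ne_zero_iff.2 hx (by simpa using hc x)
    exact ⟨Units.mk0 c c_ne_zero, Subtype.ext (Equiv.ext fun x => (hc x).symm)⟩
  · rintro _ ⟨u, rfl⟩
    refine Equiv.ext fun p => ?_
    obtain ⟨v, hv, rfl⟩ := p.exists_eq_mkPoint
    exact smul_mkPoint_eq_iff.2 (Submodule.smul_mem _ _ (Submodule.mem_span_singleton_self v))

theorem card_range_toPermHom_mul_card_units (hV : 1 < Module.rank K V) :
    Nat.card (MulAction.toPermHom (gammaL K V) (SubspaceOfRank K V 1)).range * Nat.card Kˣ =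
      Nat.card (gammaL K V) := by
  have : Nontrivial V := rank_pos_iff_nontrivial.1 (zero_le_one.trans_lt hV)
  have card_units : Nat.card Kˣ = Nat.card (homothety K V).range :=
    Nat.card_congr (MonoidHom.ofInjective homothety_injective).toEquiv
  rw [card_units, ← ker_toPermHom hV, ← Subgroup.index_ker, Subgroup.index_mul_card]

section Basis

variable {ι : Type*} [Finite ι]

/-- The semilinear transformation that applies an automorphism of the scalars to the coordinates
with respect to a basis. -/
noncomputable def ofRingEquiv (b : Basis ι K V) (φ : K ≃+* K) : gammaL K V :=
  let e : V ≃+ V := b.equivFun.toAddEquiv.trans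
    ((AddEquiv.piCongrRight fun _ => φ.toAddEquiv).trans b.equivFun.symm.toAddEquiv)
  ⟨e.toEquiv, e.map_add, φ, fun c x => b.equivFun.injective (funext fun i => by simp [e])⟩

theorem ofRingEquiv_smul (b : Basis ι K V) (φ : K ≃+* K) (c : K) (x : V) :
    (ofRingEquiv b φ).1 (c • x) = φ c • (ofRingEquiv b φ).1 x :=
  b.equivFun.injective (funext fun i => by simp [ofRingEquiv])

theorem ofRingEquiv_basis (b : Basis ι K V) (φ : K ≃+* K) (i : ι) :
    (ofRingEquiv b φ).1 (b i) = b i :=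
  b.equivFun.injective (funext fun j => by
    by_cases h : i = j <;> simp [ofRingEquiv, h])

/-- The semilinear transformation with given scalar automorphism and linear part. -/
noncomputable def ofProd (b : Basis ι K V) (x : (K ≃+* K) × (V ≃ₗ[K] V)) : gammaL K V :=
  ⟨x.2.toEquiv, x.2.map_add, RingEquiv.refl K, x.2.map_smul⟩ * ofRingEquiv b x.1

theorem ofProd_bijective [Nonempty ι] (b : Basis ι K V) : Function.Bijective (ofProd b) := by
  constructor
  · rintro ⟨φ, A⟩ ⟨ψ, B⟩ h
    have apply_eq (x : V) : A ((ofRingEquiv b φ).1 x) = B ((ofRingEquiv b ψ).1 x) :=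
      congrArg (fun g : gammaL K V => g.1 x) h
    obtain rfl : A = B := b.ext' fun i => by simpa [ofRingEquiv_basis] using apply_eq (b i)
    have i : ι := Classical.arbitrary ι
    have : φ = ψ := RingEquiv.ext fun c => by
      simpa [ofRingEquiv_basis, ofRingEquiv_smul, b.ne_zero] using apply_eq (c • b i)
    rw [this]
  · intro g
    obtain ⟨φ, hφ⟩ := g.2.2
    let h : V ≃+ V := toAddEquiv (g * (ofRingEquiv b φ)⁻¹)
    have h_apply (x : V) : h ((ofRingEquiv b φ).1 x) = g.1 x :=
      congrArg g.1 ((ofRingEquiv b φ).1.symm_apply_apply x)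
    have h_smul (c : K) (x : V) : h (c • x) = c • h x := by
      obtain ⟨y, rfl⟩ := (ofRingEquiv b φ).1.surjective x
      obtain ⟨d, rfl⟩ := φ.surjective c
      rw [← ofRingEquiv_smul, h_apply, h_apply, hφ]
    exact ⟨(φ, h.toLinearEquiv h_smul), Subtype.ext (Equiv.ext h_apply)⟩

theorem card_eq_card_ringEquiv_mul_card_linearEquiv [Nonempty ι] (b : Basis ι K V) :
    Nat.card (gammaL K V) = Nat.card (K ≃+* K) * Nat.card (V ≃ₗ[K] V) := by
  rw [← Nat.card_prod, Nat.card_congr (Equiv.ofBijective _ (ofProd_bijective b))]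

end Basis

end gammaL

end Card

section FiniteField

open Module

theorem card_ringEquiv_self (p : ℕ) [Fact p.Prime] {K : Type*} [Field K] [Finite K]
    [Algebra (ZMod p) K] : Nat.card (K ≃+* K) = finrank (ZMod p) K := by
  have algebraMap_eq (φ : K ≃+* K) (c : ZMod p) :
      φ (algebraMap (ZMod p) K c) = algebraMap (ZMod p) K c :=
    RingHom.congr_fun (RingHom.ext_zmod (φ.toRingHom.comp (algebraMap (ZMod p) K)) _) c
  rw [← IsGalois.card_aut_eq_finrank]
  exact Nat.card_congr
    { toFun := fun φ => AlgEquiv.ofRingEquiv (algebraMap_eq φ)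
      invFun := AlgEquiv.toRingEquiv }

variable {K V : Type*} [Field K] [Finite K] [AddCommGroup V] [Module K V]

theorem card_linearEquiv_self [FiniteDimensional K V] :
    Nat.card (V ≃ₗ[K] V) =
      ∏ i : Fin (finrank K V), (Nat.card K ^ finrank K V - Nat.card K ^ (i : ℕ)) := by
  cases nonempty_fintype K
  rw [Nat.card_eq_fintype_card (α := K), ← Matrix.card_GL_field]
  exact Nat.card_congr ((LinearMap.GeneralLinearGroup.generalLinearEquiv K V).symm.trans
    (Units.mapEquiv (LinearMap.toMatrixAlgEquiv (finBasis K V)).toMulEquiv)).toEquiv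

variable [hV : Fact (finrank K V = 3)]

theorem card_linearEquiv_self_of_finrank_eq_three :
    Nat.card (V ≃ₗ[K] V) =
      Nat.card K ^ 3 * (Nat.card K ^ 3 - 1) * (Nat.card K ^ 2 - 1) * (Nat.card K - 1) := by
  have := SubspaceOfRank.finiteDimensional_of_fact (K := K) (V := V)
  have sub_one : Nat.card K ^ 3 - Nat.card K = Nat.card K * (Nat.card K ^ 2 - 1) := by
    rw [Nat.mul_sub, mul_one, ← pow_succ']
  have sub_two : Nat.card K ^ 3 - Nat.card K ^ 2 = Nat.card K ^ 2 * (Nat.card K - 1) := by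
    rw [Nat.mul_sub, mul_one, ← pow_succ]
  rw [card_linearEquiv_self, hV.out, Fin.prod_univ_three]
  simp only [Fin.val_zero, Fin.val_one, Fin.val_two, pow_zero, pow_one, sub_one, sub_two]
  ring

theorem gammaL.card_range_toPermHom :
    Nat.card (MulAction.toPermHom (gammaL K V) (SubspaceOfRank K V 1)).range =
      Nat.card (K ≃+* K) * (Nat.card K ^ 3 * (Nat.card K ^ 3 - 1) * (Nat.card K ^ 2 - 1)) := by
  have := SubspaceOfRank.finiteDimensional_of_fact (K := K) (V := V)
  have one_lt_rank : 1 < Module.rank K V := by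
    rw [← finrank_eq_rank, hV.out]
    norm_num
  have card_mul := card_range_toPermHom_mul_card_units one_lt_rank
  rw [card_eq_card_ringEquiv_mul_card_linearEquiv (finBasisOfFinrankEq K V hV.out),
    card_linearEquiv_self_of_finrank_eq_three, Nat.card_units, ← mul_assoc] at card_mul
  exact Nat.eq_of_mul_eq_mul_right (Nat.sub_pos_of_lt Finite.one_lt_card) card_mul

theorem autH_eq_PGammaL_general {R : Type*} [Semiring R] [Nontrivial R]
    (hR : (Nat.card K : R) = 0) :
    codeAut (lineCode R (SubspaceOfRank K V 1) (SubspaceOfRank K V 2)) =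
        (MulAction.toPermHom (gammaL K V) (SubspaceOfRank K V 1)).range ∧
      Nat.card (codeAut (lineCode R (SubspaceOfRank K V 1) (SubspaceOfRank K V 2))) =
        Nat.card (K ≃+* K) * (Nat.card K ^ 3 * (Nat.card K ^ 3 - 1) * (Nat.card K ^ 2 - 1)) := by
  have := SubspaceOfRank.finiteDimensional_of_fact (K := K) (V := V)
  have : Finite V := Module.finite_of_finite K
  have two_lt_rank : 2 < Module.rank K V := by
    rw [← finrank_eq_rank, hV.out]
    norm_num
  have order_eq_zero : (Configuration.ProjectivePlane.order (SubspaceOfRank K V 1)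
      (SubspaceOfRank K V 2) : R) = 0 := by rw [SubspaceOfRank.order_eq, hR]
  have codeAut_eq := (codeAut_lineCode order_eq_zero).trans
    (collineationGroup_eq_range_toPermHom two_lt_rank)
  exact ⟨codeAut_eq, codeAut_eq ▸ gammaL.card_range_toPermHom⟩

end FiniteField

theorem autH_eq_coe_codeAut :
    AutH = SetLike.coe (codeAut (lineCode (ZMod 2) (SubspaceOfRank F4 (Fin 3 → F4) 1)
      (SubspaceOfRank F4 (Fin 3 → F4) 2))) := rfl

theorem PGammaL_eq_coe_range_toPermHom :
    PGammaL = SetLike.coe (MulAction.toPermHom (gammaL F4 (Fin 3 → F4))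
      (SubspaceOfRank F4 (Fin 3 → F4) 1)).range := by
  ext σ
  constructor
  · rintro ⟨φ, g, hg, hφ, hσ⟩
    exact ⟨⟨g, hg, φ, hφ⟩, Equiv.ext fun p => Subtype.ext (SetLike.coe_injective (hσ p).symm)⟩
  · rintro ⟨⟨g, hg, φ, hφ⟩, rfl⟩
    exact ⟨φ, g, hg, hφ, fun _ => rfl⟩

/-- the automorphism group of `H` is exactly `PΓL(3,4)`,
of order 120960. -/
theorem autH_eq_PGammaL : AutH = PGammaL ∧ Nat.card ↥AutH = 120960 := by
  have : Fact (Module.finrank F4 (Fin 3 → F4) = 3) := ⟨Module.finrank_fin_fun F4⟩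
  have card_F4 : Nat.card F4 = 4 := GaloisField.card 2 2 two_ne_zero
  have card_ringEquiv : Nat.card (F4 ≃+* F4) = 2 :=
    (card_ringEquiv_self 2).trans (GaloisField.finrank 2 two_ne_zero)
  obtain ⟨codeAut_eq, card_codeAut⟩ := autH_eq_PGammaL_general (K := F4) (V := Fin 3 → F4)
    (R := ZMod 2) (by rw [card_F4]; rfl)
  rw [autH_eq_coe_codeAut, PGammaL_eq_coe_range_toPermHom]
  refine ⟨congrArg _ codeAut_eq, card_codeAut.trans ?_⟩
  rw [card_ringEquiv, card_F4]
  norm_num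
end

section
/- Let A = (0^{21},4,0,−4), B = (0^{21},0,4,−4) in the Leech lattice Λ₂₄ and let R_{AB} be the rank-2 sublattice (Z-span of A and B, saturated in Λ₂₄) containing A and B. Then the sublattice of Λ₂₄ generated by all differences T − T′ with T, T′ ∈ T_{AB} equals the orthogonal complement R_{AB}^⊥ of R_{AB} in Λ₂₄. -/
open scoped BigOperators

/-- A generator matrix of the extended binary Golay code (MOG coordinates). -/
def golayMatrix : Matrix (Fin 12) (Fin 24) (ZMod 2) :=
  !![0, 0, 0, 0, 0, 0, 0, 0, 0, 0, 0, 0, 0, 0, 0, 0, 1, 1, 1, 1, 1, 1, 1, 1;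
    0, 0, 0, 0, 0, 0, 0, 0, 0, 0, 0, 0, 1, 1, 1, 1, 0, 0, 0, 0, 1, 1, 1, 1;
    0, 0, 0, 0, 0, 0, 0, 0, 0, 0, 1, 1, 0, 0, 1, 1, 0, 0, 1, 1, 0, 0, 1, 1;
    0, 0, 0, 0, 0, 0, 0, 0, 0, 1, 0, 1, 0, 1, 0, 1, 0, 1, 0, 1, 0, 1, 0, 1;
    0, 0, 0, 0, 0, 0, 0, 0, 1, 0, 0, 1, 0, 1, 1, 0, 0, 1, 1, 0, 1, 0, 0, 1;
    0, 0, 0, 0, 0, 0, 1, 1, 0, 0, 0, 0, 0, 0, 1, 1, 0, 1, 1, 0, 0, 1, 0, 1;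
    0, 0, 0, 0, 0, 1, 0, 1, 0, 0, 0, 0, 0, 1, 0, 1, 0, 0, 1, 1, 0, 1, 1, 0;
    0, 0, 0, 0, 1, 0, 0, 1, 0, 0, 0, 0, 0, 1, 1, 0, 0, 1, 0, 1, 1, 1, 0, 0;
    0, 0, 0, 1, 0, 0, 0, 1, 0, 0, 0, 1, 0, 0, 0, 1, 0, 1, 1, 1, 1, 0, 0, 0;
    0, 0, 1, 0, 0, 0, 0, 1, 0, 0, 0, 1, 0, 0, 1, 0, 0, 0, 1, 0, 1, 1, 1, 0;
    0, 1, 0, 0, 0, 0, 0, 1, 0, 0, 0, 1, 0, 1, 0, 0, 0, 0, 0, 1, 1, 0, 1, 1;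
    1, 0, 0, 0, 0, 0, 0, 1, 0, 0, 0, 1, 0, 1, 1, 1, 0, 1, 0, 0, 0, 0, 1, 0]

/-- The extended binary Golay code `C₂₄`. -/
def GolayCode : Submodule (ZMod 2) (Fin 24 → ZMod 2) :=
  Submodule.span (ZMod 2) (Set.range fun i => golayMatrix i)

/-- Membership in the Leech lattice `Λ₂₄ ⊂ ℤ²⁴` (coordinates scaled by `√8`),
via the standard congruence characterization. -/
def IsLeech (x : Fin 24 → ℤ) : Prop :=
  ∃ m : ℤ, (m = 0 ∨ m = 1) ∧ (∀ i, (2:ℤ) ∣ (x i - m)) ∧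
    ((fun i => if (4:ℤ) ∣ (x i - m - 2) then (1 : ZMod 2) else 0) ∈ GolayCode) ∧
    (8:ℤ) ∣ ((∑ i, x i) - 4 * m)

/-- The inner product `⟨x, y⟩ = (Σ xᵢ yᵢ)/8` on the Leech lattice. -/
def leechInner (x y : Fin 24 → ℤ) : ℚ := (∑ i, (x i : ℚ) * (y i : ℚ)) / 8

/-- The lattice point `A = (0²¹, 4, 0, −4)`. -/
def vA : Fin 24 → ℤ := fun i => if i.val = 21 then 4 else if i.val = 23 then -4 else 0

/-- The lattice point `B = (0²¹, 0, 4, −4)`. -/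
def vB : Fin 24 → ℤ := fun i => if i.val = 22 then 4 else if i.val = 23 then -4 else 0

/-- `T_AB`: lattice points `T` with `|OT| = |AT| = |BT| = 2`. -/
def TAB : Set (Fin 24 → ℤ) :=
  {T | IsLeech T ∧ leechInner T T = 4 ∧
       leechInner (T - vA) (T - vA) = 4 ∧ leechInner (T - vB) (T - vB) = 4}

/-!
Every `v` in the orthogonal complement of `A` and `B` is constant on the last three coordinates. It
is reduced to `0` by subtracting differences of points of `T_AB` along the filtration of the Leech
lattice by divisibility by `2` and `4`.

* A multiple of `(1²³, -3) - (0²¹, 4, 4, 0)` makes `v` even, say `v = 2u`.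
* `u` modulo `2` is a Golay codeword constant on the last three coordinates, hence a sum of octads
  `O` containing these. For `p ∈ O` outside them, `2·1_O - 4eₚ - 4e₂₃` and `-4eₚ - 4e₂₃` lie in
  `T_AB` and differ by `2·1_O`, so `v` can be made divisible by `4`.
* What remains is `4y` with `y` of even coordinate sum, a combination of differences of the points
  `±4eᵢ - 4e₂₃` and `(0²¹, 4, 4, 0)`.
-/

theorem sum_zsmul_mem_of_even_sum {ι M : Type*} [AddCommGroup M] {G : AddSubgroup M} {a : M}
    {f : ι → M} {z : ι → ℤ} {s : Finset ι} (ha : a + a ∈ G) (hf : ∀ i ∈ s, f i + a ∈ G)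
    (hz : Even (∑ i ∈ s, z i)) : ∑ i ∈ s, z i • f i ∈ G := by
  obtain ⟨n, hn⟩ := hz
  have hsum : ∑ i ∈ s, z i • f i = ∑ i ∈ s, z i • (f i + a) - n • (a + a) := by
    simp only [smul_add, Finset.sum_add_distrib, ← Finset.sum_smul, hn, add_smul]
    abel
  rw [hsum]
  exact G.sub_mem (G.sum_mem fun i hi => G.zsmul_mem (hf i hi) _) (G.zsmul_mem ha n)

/-! ### Binary codes and integer vectors -/

section ConstructionB

variable {ι : Type*}

/-- Coordinatewise reduction of integer vectors modulo `2`. -/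
def modTwo : (ι → ℤ) →+ (ι → ZMod 2) := (Int.castAddHom (ZMod 2)).compLeft ι

@[simp]
theorem modTwo_apply (u : ι → ℤ) (i : ι) : modTwo u i = (u i : ZMod 2) := rfl

theorem modTwo_two_smul (u : ι → ℤ) : modTwo ((2 : ℤ) • u) = 0 := by
  ext i
  simpa using Or.inl (by decide : (2 : ZMod 2) = 0)

theorem exists_eq_add_two_smul_of_modTwo_eq {u w : ι → ℤ} (h : modTwo u = modTwo w) :
    ∃ y, u = w + (2 : ℤ) • y := by
  have hdvd (i : ι) : (2 : ℤ) ∣ u i - w i :=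
    (ZMod.intCast_eq_intCast_iff_dvd_sub _ _ 2).1 (congrFun h i).symm
  choose y hy using hdvd
  refine ⟨y, funext fun i => ?_⟩
  simp only [Pi.add_apply, Pi.smul_apply, smul_eq_mul, ← hy i, add_sub_cancel]

/-- The characteristic vector of a finite set of coordinates, with entries in `R`. -/
def charVec (R : Type*) [Zero R] [One R] [DecidableEq ι] (O : Finset ι) : ι → R :=
  fun i => if i ∈ O then 1 else 0

theorem sum_charVec (R : Type*) [NonAssocSemiring R] [DecidableEq ι] [Fintype ι] (O : Finset ι) :
    ∑ i, charVec R O i = O.card := by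
  simp [charVec]

theorem charVec_dotProduct_self (R : Type*) [NonAssocSemiring R] [DecidableEq ι] [Fintype ι]
    (O : Finset ι) : charVec R O ⬝ᵥ charVec R O = O.card := by
  simp [charVec, dotProduct]

theorem modTwo_charVec [DecidableEq ι] (O : Finset ι) :
    modTwo (charVec ℤ O) = charVec (ZMod 2) O := by
  ext i
  simp [charVec]

/-- The unscaled Construction B lattice of a binary code `C`: the integer vectors reducing to `C`
modulo `2` whose coordinate sum is divisible by `4`. Twice the one of the Golay code is the
sublattice of even vectors of the Leech lattice. -/
def constructionB [Fintype ι] (C : Submodule (ZMod 2) (ι → ZMod 2)) : AddSubgroup (ι → ℤ) where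
  carrier := {u | modTwo u ∈ C ∧ 4 ∣ ∑ i, u i}
  add_mem' := by
    rintro u w ⟨huC, hu4⟩ ⟨hwC, hw4⟩
    refine ⟨map_add modTwo u w ▸ C.add_mem huC hwC, ?_⟩
    simpa only [Pi.add_apply, Finset.sum_add_distrib] using dvd_add hu4 hw4
  zero_mem' := by simp
  neg_mem' := by
    rintro u ⟨huC, hu4⟩
    refine ⟨map_neg modTwo u ▸ C.neg_mem huC, ?_⟩
    simpa only [Pi.neg_apply, Finset.sum_neg_distrib, dvd_neg] using hu4

theorem mem_constructionB [Fintype ι] {C : Submodule (ZMod 2) (ι → ZMod 2)} {u : ι → ℤ} :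
    u ∈ constructionB C ↔ modTwo u ∈ C ∧ 4 ∣ ∑ i, u i := Iff.rfl

theorem two_smul_mem_constructionB [Fintype ι] {C : Submodule (ZMod 2) (ι → ZMod 2)}
    {y : ι → ℤ} : (2 : ℤ) • y ∈ constructionB C ↔ Even (∑ i, y i) := by
  have hsum : ∑ i, ((2 : ℤ) • y) i = 2 * ∑ i, y i := by
    simp only [Pi.smul_apply, smul_eq_mul, Finset.mul_sum]
  have hfour : 4 ∣ 2 * ∑ i, y i ↔ Even (∑ i, y i) := by
    rw [even_iff_two_dvd]
    omega
  simp only [mem_constructionB, modTwo_two_smul, zero_mem, true_and, hsum, hfour]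

end ConstructionB

/-! ### The Golay code -/

/-- A pivot column of each row of `golayMatrix`. -/
def golayPivot : Fin 12 → Fin 24 := ![16, 12, 10, 9, 8, 6, 5, 4, 3, 2, 1, 0]

theorem mem_golayCode_of_eq_sum_pivot {c : Fin 24 → ZMod 2}
    (hc : ∀ k, ∑ i, c (golayPivot i) * golayMatrix i k = c k) : c ∈ GolayCode :=
  (Submodule.mem_span_range_iff_exists_fun (ZMod 2)).2
    ⟨fun i => c (golayPivot i), funext fun k => by
      simpa only [Finset.sum_apply, Pi.smul_apply, smul_eq_mul] using hc k⟩

theorem one_mem_golayCode : (1 : Fin 24 → ZMod 2) ∈ GolayCode :=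
  mem_golayCode_of_eq_sum_pivot (by decide +kernel)

/-- The octads of the Golay code that contain the last three coordinates, on which `A` and `B` are
supported. -/
def tripleOctads : Set (Finset (Fin 24)) :=
  {O | charVec (ZMod 2) O ∈ GolayCode ∧ O.card = 8 ∧ {21, 22, 23} ⊆ O}

/-- Ten of the 21 members of `tripleOctads`; their characteristic vectors form a basis of the code
of Golay codewords that are constant on the last three coordinates. -/
def basisOctad : Fin 10 → Finset (Fin 24) :=
  ![{16, 17, 18, 19, 20, 21, 22, 23},
    {12, 13, 14, 15, 20, 21, 22, 23},
    {4, 5, 6, 7, 20, 21, 22, 23},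
    {0, 6, 11, 13, 18, 21, 22, 23},
    {1, 4, 11, 14, 17, 21, 22, 23},
    {1, 6, 8, 15, 19, 21, 22, 23},
    {1, 7, 10, 12, 18, 21, 22, 23},
    {2, 4, 9, 15, 18, 21, 22, 23},
    {2, 7, 8, 13, 17, 21, 22, 23},
    {3, 7, 11, 15, 16, 21, 22, 23}]

theorem basisOctad_mem_tripleOctads (j : Fin 10) : basisOctad j ∈ tripleOctads :=
  ⟨mem_golayCode_of_eq_sum_pivot (by revert j; decide +kernel), by revert j; decide +kernel,
    by revert j; decide +kernel⟩

/-- The indices of the basis octads adding up to the `i`-th row of `golayMatrix`, once that row has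
been made constant on the last three coordinates by means of rows `4` and `7`. -/
def octadExpansion : Fin 12 → Finset (Fin 10) :=
  ![{0}, {1}, {1, 4, 6}, {7, 8}, ∅, {4, 5}, {2, 4, 5}, ∅, {0, 9}, {8}, {4}, {3, 4, 5}]

/-- Corrects a word to one that is constant on the last three coordinates. Rows `4` and `7` of
`golayMatrix` end in `(0, 0, 1)` and `(1, 0, 0)`. -/
def tripleProjection : (Fin 24 → ZMod 2) →ₗ[ZMod 2] (Fin 24 → ZMod 2) :=
  let coord (i : Fin 24) : Module.Dual (ZMod 2) (Fin 24 → ZMod 2) := LinearMap.proj i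
  LinearMap.id - (coord 23 - coord 22).smulRight (golayMatrix 4)
    - (coord 21 - coord 22).smulRight (golayMatrix 7)

theorem tripleProjection_apply (c : Fin 24 → ZMod 2) :
    tripleProjection c =
      c - (c 23 - c 22) • golayMatrix 4 - (c 21 - c 22) • golayMatrix 7 := rfl

theorem tripleProjection_golayMatrix (i : Fin 12) :
    tripleProjection (golayMatrix i) =
      ∑ j ∈ octadExpansion i, charVec (ZMod 2) (basisOctad j) := by
  ext k
  simp only [tripleProjection_apply, Pi.sub_apply, Pi.smul_apply, Finset.sum_apply]
  revert i k
  decide +kernel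

theorem mem_span_tripleOctads {c : Fin 24 → ZMod 2} (hc : c ∈ GolayCode)
    (h21 : c 21 = c 23) (h22 : c 22 = c 23) :
    c ∈ Submodule.span (ZMod 2) (charVec (ZMod 2) '' tripleOctads) := by
  have hle : GolayCode ≤
      (Submodule.span (ZMod 2) (charVec (ZMod 2) '' tripleOctads)).comap tripleProjection := by
    refine Submodule.span_le.2 ?_
    rintro _ ⟨i, rfl⟩
    rw [SetLike.mem_coe, Submodule.mem_comap, tripleProjection_golayMatrix]
    exact Submodule.sum_mem _ fun j _ =>
      Submodule.subset_span (Set.mem_image_of_mem _ (basisOctad_mem_tripleOctads j))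
  have hfix : tripleProjection c = c := by
    simp [tripleProjection_apply, h21, h22]
  exact hfix ▸ hle hc

/-! ### The Leech lattice -/

/-- The minimal vector `(1²³, -3)`, which represents the odd coset of the even vectors of the Leech
lattice. -/
def oddVec : Fin 24 → ℤ := 1 - Pi.single 23 4

theorem oddVec_apply_eq_one_or_neg_three (i : Fin 24) : oddVec i = 1 ∨ oddVec i = -3 := by
  revert i
  decide +kernel

theorem modTwo_oddVec : modTwo oddVec = 1 := by decide +kernel

theorem oddVec_mem_constructionB : oddVec ∈ constructionB GolayCode :=
  mem_constructionB.2 ⟨modTwo_oddVec ▸ one_mem_golayCode, by decide +kernel⟩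

/-- The Leech lattice, generated by `oddVec` and by its even vectors. -/
def leechLattice : AddSubgroup (Fin 24 → ℤ) :=
  AddSubgroup.zmultiples oddVec ⊔
    (constructionB GolayCode).map (zsmulAddGroupHom 2)

theorem mem_leechLattice {x : Fin 24 → ℤ} :
    x ∈ leechLattice ↔
      ∃ m : ℤ, ∃ u ∈ constructionB GolayCode, m • oddVec + (2 : ℤ) • u = x := by
  simp [leechLattice, AddSubgroup.mem_sup, AddSubgroup.mem_zmultiples_iff]

theorem two_smul_mem_leechLattice {u : Fin 24 → ℤ} :
    (2 : ℤ) • u ∈ leechLattice ↔ u ∈ constructionB GolayCode := by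
  refine ⟨fun h => ?_, fun hu => mem_leechLattice.2 ⟨0, u, hu, by simp⟩⟩
  obtain ⟨m, w, hw, hmw⟩ := mem_leechLattice.1 h
  obtain ⟨n, rfl⟩ : (2 : ℤ) ∣ m := by
    have h0 : m * 1 + 2 * w 0 = 2 * u 0 := congrFun hmw 0
    omega
  have hu : u = n • oddVec + w := by
    refine smul_right_injective _ (two_ne_zero (α := ℤ)) ?_
    simp only [← hmw, smul_add, mul_smul]
  exact hu ▸ add_mem (zsmul_mem oddVec_mem_constructionB n) hw

theorem four_smul_mem_leechLattice {y : Fin 24 → ℤ} :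
    (4 : ℤ) • y ∈ leechLattice ↔ Even (∑ i, y i) := by
  have h4 : (4 : ℤ) • y = (2 : ℤ) • (2 : ℤ) • y := by rw [smul_smul]; norm_num
  rw [h4, two_smul_mem_leechLattice, two_smul_mem_constructionB]

theorem oddVec_mem_leechLattice : oddVec ∈ leechLattice :=
  AddSubgroup.mem_sup_left (AddSubgroup.mem_zmultiples oddVec)

theorem sum_smul_oddVec_add_two_smul (m : ℤ) (u : Fin 24 → ℤ) :
    ∑ i, (m • oddVec + (2 : ℤ) • u) i = 20 * m + 2 * ∑ i, u i := by
  have hodd : ∑ i, oddVec i = 20 := by decide +kernel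
  simp only [Pi.add_apply, Pi.smul_apply, smul_eq_mul, Finset.sum_add_distrib, ← Finset.mul_sum,
    hodd]
  ring

theorem ite_four_dvd_eq_modTwo (m : ℤ) (u : Fin 24 → ℤ) :
    (fun i => if (4 : ℤ) ∣ (m • oddVec + (2 : ℤ) • u) i - m - 2 then (1 : ZMod 2) else 0) =
      modTwo u := by
  ext i
  have hdvd : (4 : ℤ) ∣ (m • oddVec + (2 : ℤ) • u) i - m - 2 ↔ ¬ (2 : ℤ) ∣ u i := by
    rcases oddVec_apply_eq_one_or_neg_three i with h | h <;>
      simp only [Pi.add_apply, Pi.smul_apply, smul_eq_mul, h] <;> omega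
  have hzero : (u i : ZMod 2) = 0 ↔ (2 : ℤ) ∣ u i := ZMod.intCast_zmod_eq_zero_iff_dvd _ 2
  simp only [hdvd, ← hzero, modTwo_apply]
  generalize (u i : ZMod 2) = a
  revert a
  decide

theorem exists_eq_smul_oddVec_add_two_smul {m : ℤ} {x : Fin 24 → ℤ} (hx : ∀ i, 2 ∣ x i - m) :
    ∃ u : Fin 24 → ℤ, x = m • oddVec + (2 : ℤ) • u := by
  refine exists_eq_add_two_smul_of_modTwo_eq (funext fun i => ?_)
  have hodd : (oddVec i : ZMod 2) = 1 := congrFun modTwo_oddVec i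
  have hxm : (x i : ZMod 2) = m := ((ZMod.intCast_eq_intCast_iff_dvd_sub _ _ 2).2 (hx i)).symm
  simp [hodd, hxm]

theorem isLeech_iff_mem_leechLattice {x : Fin 24 → ℤ} : IsLeech x ↔ x ∈ leechLattice := by
  rw [mem_leechLattice]
  constructor
  · rintro ⟨m, -, hparity, hcode, hsum⟩
    obtain ⟨u, rfl⟩ := exists_eq_smul_oddVec_add_two_smul hparity
    rw [ite_four_dvd_eq_modTwo] at hcode
    rw [sum_smul_oddVec_add_two_smul] at hsum
    exact ⟨m, u, ⟨hcode, by omega⟩, rfl⟩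
  · rintro ⟨m, w, hw, rfl⟩
    obtain ⟨u, hu, hx⟩ : ∃ u ∈ constructionB GolayCode,
        m • oddVec + (2 : ℤ) • w = (m % 2) • oddVec + (2 : ℤ) • u := by
      refine ⟨(m / 2) • oddVec + w, add_mem (zsmul_mem oddVec_mem_constructionB _) hw, ?_⟩
      rw [smul_add, smul_smul, ← add_assoc, ← add_smul, Int.emod_add_mul_ediv]
    rw [hx]
    obtain ⟨hcode, hsum⟩ := mem_constructionB.1 hu
    refine ⟨m % 2, Int.emod_two_eq_zero_or_one m, fun i => ?_, ?_, ?_⟩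
    · rcases oddVec_apply_eq_one_or_neg_three i with h | h <;>
        simp only [Pi.add_apply, Pi.smul_apply, smul_eq_mul, h] <;> omega
    · rwa [ite_four_dvd_eq_modTwo]
    · rw [sum_smul_oddVec_add_two_smul]
      omega

/-! ### The inner product with `A` and `B` -/

theorem leechInner_eq_dotProduct (x y : Fin 24 → ℤ) : leechInner x y = (x ⬝ᵥ y : ℤ) / 8 := by
  simp [leechInner, dotProduct]

theorem leechInner_sub_sub_self (x y : Fin 24 → ℤ) :
    leechInner (x - y) (x - y) = leechInner x x - 2 * leechInner x y + leechInner y y := by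
  simp only [leechInner_eq_dotProduct, sub_dotProduct, dotProduct_sub, dotProduct_comm y x]
  push_cast
  ring

theorem vA_eq_single_sub_single : vA = Pi.single 21 4 - Pi.single 23 4 := by decide +kernel

theorem vB_eq_single_sub_single : vB = Pi.single 22 4 - Pi.single 23 4 := by decide +kernel

theorem leechInner_vA (v : Fin 24 → ℤ) : leechInner v vA = (v 21 - v 23 : ℤ) / 2 := by
  rw [leechInner_eq_dotProduct, vA_eq_single_sub_single, dotProduct_sub,
    dotProduct_single, dotProduct_single]
  push_cast
  ring

theorem leechInner_vB (v : Fin 24 → ℤ) : leechInner v vB = (v 22 - v 23 : ℤ) / 2 := by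
  rw [leechInner_eq_dotProduct, vB_eq_single_sub_single, dotProduct_sub,
    dotProduct_single, dotProduct_single]
  push_cast
  ring

theorem mem_TAB {T : Fin 24 → ℤ} :
    T ∈ TAB ↔ T ∈ leechLattice ∧ T ⬝ᵥ T = 32 ∧ T 21 - T 23 = 4 ∧ T 22 - T 23 = 4 := by
  have hnorm : leechInner T T = 4 ↔ T ⬝ᵥ T = 32 := by
    rw [leechInner_eq_dotProduct, div_eq_iff (by norm_num),
      show (4 : ℚ) * 8 = (32 : ℤ) by norm_num, Int.cast_inj]
  have hA : leechInner T vA = 2 ↔ T 21 - T 23 = 4 := by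
    rw [leechInner_vA, div_eq_iff two_ne_zero, show (2 : ℚ) * 2 = (4 : ℤ) by norm_num,
      Int.cast_inj]
  have hB : leechInner T vB = 2 ↔ T 22 - T 23 = 4 := by
    rw [leechInner_vB, div_eq_iff two_ne_zero, show (2 : ℚ) * 2 = (4 : ℤ) by norm_num,
      Int.cast_inj]
  have hAA : leechInner vA vA = 4 := by rw [leechInner_vA]; norm_num [vA]
  have hBB : leechInner vB vB = 4 := by rw [leechInner_vB]; norm_num [vB]
  rw [← hnorm, ← hA, ← hB, ← isLeech_iff_mem_leechLattice]
  refine and_congr_right fun _ => and_congr_right fun h => and_congr ?_ ?_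
  · rw [leechInner_sub_sub_self, h, hAA]
    constructor <;> intro h' <;> linarith
  · rw [leechInner_sub_sub_self, h, hBB]
    constructor <;> intro h' <;> linarith

/-- The orthogonal complement of `A` and `B` in the Leech lattice: the lattice vectors that are
constant on the last three coordinates. -/
def perpAB : AddSubgroup (Fin 24 → ℤ) where
  carrier := {v | v ∈ leechLattice ∧ v 21 = v 23 ∧ v 22 = v 23}
  add_mem' := fun ⟨hu, hu21, hu22⟩ ⟨hv, hv21, hv22⟩ =>
    ⟨add_mem hu hv, congrArg₂ (· + ·) hu21 hv21, congrArg₂ (· + ·) hu22 hv22⟩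
  zero_mem' := ⟨zero_mem _, rfl, rfl⟩
  neg_mem' := fun ⟨hv, hv21, hv22⟩ => ⟨neg_mem hv, congrArg (- ·) hv21, congrArg (- ·) hv22⟩

theorem mem_perpAB {v : Fin 24 → ℤ} :
    v ∈ perpAB ↔ v ∈ leechLattice ∧ v 21 = v 23 ∧ v 22 = v 23 := Iff.rfl

theorem mem_perpAB_iff_leechInner_eq_zero {v : Fin 24 → ℤ} :
    v ∈ perpAB ↔ IsLeech v ∧ leechInner v vA = 0 ∧ leechInner v vB = 0 := by
  rw [mem_perpAB, isLeech_iff_mem_leechLattice, leechInner_vA, leechInner_vB]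
  simp [sub_eq_zero]

/-! ### Differences of points of `T_AB` -/

/-- The lattice generated by the differences of points of `TAB`. -/
def diffLattice : AddSubgroup (Fin 24 → ℤ) :=
  AddSubgroup.closure {d | ∃ T ∈ TAB, ∃ T' ∈ TAB, d = T - T'}

theorem sub_mem_diffLattice {T T' : Fin 24 → ℤ} (hT : T ∈ TAB) (hT' : T' ∈ TAB) :
    T - T' ∈ diffLattice :=
  AddSubgroup.subset_closure ⟨T, hT, T', hT', rfl⟩

theorem diffLattice_le_perpAB : diffLattice ≤ perpAB := by
  refine (AddSubgroup.closure_le _).2 ?_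
  rintro _ ⟨T, hT, T', hT', rfl⟩
  obtain ⟨hTL, -, hTA, hTB⟩ := mem_TAB.1 hT
  obtain ⟨hTL', -, hTA', hTB'⟩ := mem_TAB.1 hT'
  refine mem_perpAB.2 ⟨sub_mem hTL hTL', ?_, ?_⟩ <;> simp only [Pi.sub_apply] <;> omega

theorem oddVec_mem_TAB : oddVec ∈ TAB :=
  mem_TAB.2 ⟨oddVec_mem_leechLattice, by decide +kernel⟩

theorem four_smul_mem_TAB {y : Fin 24 → ℤ} (hsum : Even (∑ i, y i)) (hnorm : y ⬝ᵥ y = 2)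
    (h21 : y 21 - y 23 = 1) (h22 : y 22 - y 23 = 1) : (4 : ℤ) • y ∈ TAB := by
  refine mem_TAB.2 ⟨four_smul_mem_leechLattice.2 hsum, ?_, ?_, ?_⟩
  · rw [smul_dotProduct, dotProduct_smul, hnorm]
    norm_num
  all_goals simp only [Pi.smul_apply, smul_eq_mul]; omega

theorem four_smul_single_add_single_mem_TAB :
    (4 : ℤ) • (Pi.single 21 1 + Pi.single 22 1 : Fin 24 → ℤ) ∈ TAB :=
  four_smul_mem_TAB (by decide +kernel) (by decide +kernel) (by decide +kernel) (by decide +kernel)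

theorem four_smul_single_sub_single_mem_TAB {i : Fin 24} (hi : i < 21) :
    (4 : ℤ) • (Pi.single i 1 - Pi.single 23 1 : Fin 24 → ℤ) ∈ TAB := by
  apply four_smul_mem_TAB <;> revert i <;> decide +kernel

theorem four_smul_neg_single_sub_single_mem_TAB {i : Fin 24} (hi : i < 21) :
    (4 : ℤ) • (-Pi.single i 1 - Pi.single 23 1 : Fin 24 → ℤ) ∈ TAB := by
  apply four_smul_mem_TAB <;> revert i <;> decide +kernel

theorem four_smul_single_add_single_mem_diffLattice {i j : Fin 24} (hi : i < 21) (hj : j < 21) :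
    (4 : ℤ) • (Pi.single i 1 + Pi.single j 1 : Fin 24 → ℤ) ∈ diffLattice := by
  convert sub_mem_diffLattice (four_smul_single_sub_single_mem_TAB hi)
    (four_smul_neg_single_sub_single_mem_TAB hj) using 1
  module

theorem four_smul_triple_add_single_mem_diffLattice {j : Fin 24} (hj : j < 21) :
    (4 : ℤ) • (Pi.single 21 1 + Pi.single 22 1 + Pi.single 23 1 + Pi.single j 1 : Fin 24 → ℤ) ∈
      diffLattice := by
  convert sub_mem_diffLattice four_smul_single_add_single_mem_TAB
    (four_smul_neg_single_sub_single_mem_TAB hj) using 1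
  module

theorem four_smul_mem_diffLattice_of_eq_zero {y : Fin 24 → ℤ} (hy0 : ∀ i, 21 ≤ i → y i = 0)
    (hy : Even (∑ i, y i)) : (4 : ℤ) • y ∈ diffLattice := by
  have hsupp (i : Fin 24) (hi : y i ≠ 0) : i < 21 := lt_of_not_ge fun h => hi (hy0 i h)
  have hsum : ∑ i with i < 21, y i = ∑ i, y i := Finset.sum_filter_of_ne fun i _ => hsupp i
  have hsplit : (4 : ℤ) • y = ∑ i with i < 21, y i • (4 : ℤ) • Pi.single i 1 := by
    rw [Finset.sum_filter_of_ne fun i _ h => hsupp i fun h0 => h (by rw [h0, zero_smul])]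
    simp only [smul_comm _ (4 : ℤ), ← Finset.smul_sum, ← pi_eq_sum_univ']
  rw [hsplit]
  refine sum_zsmul_mem_of_even_sum (a := (4 : ℤ) • Pi.single 0 1) ?_ (fun i hi => ?_)
    (hsum ▸ hy) <;> rw [← smul_add]
  · exact four_smul_single_add_single_mem_diffLattice (by decide) (by decide)
  · exact four_smul_single_add_single_mem_diffLattice (Finset.mem_filter.1 hi).2 (by decide)

theorem four_smul_mem_diffLattice {y : Fin 24 → ℤ} (hy : (4 : ℤ) • y ∈ perpAB) :
    (4 : ℤ) • y ∈ diffLattice := by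
  obtain ⟨hleech, h21, h22⟩ := mem_perpAB.1 hy
  replace h21 : y 21 = y 23 := mul_left_cancel₀ four_ne_zero h21
  replace h22 : y 22 = y 23 := mul_left_cancel₀ four_ne_zero h22
  let t : Fin 24 → ℤ := Pi.single 21 1 + Pi.single 22 1 + Pi.single 23 1 + Pi.single 0 1
  have hz : (4 : ℤ) • (y - y 23 • t) ∈ diffLattice := by
    refine four_smul_mem_diffLattice_of_eq_zero (fun i hi => ?_) ?_
    · obtain rfl | rfl | rfl : i = 21 ∨ i = 22 ∨ i = 23 := by revert i; decide
      all_goals simp [t, h21, h22]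
    · have ht : ∑ i, t i = 4 := by decide +kernel
      simp only [Pi.sub_apply, Pi.smul_apply, smul_eq_mul, Finset.sum_sub_distrib,
        ← Finset.mul_sum, ht]
      exact (four_smul_mem_leechLattice.1 hleech).sub ((by decide : Even (4 : ℤ)).mul_left _)
  have ht : (4 : ℤ) • t ∈ diffLattice := four_smul_triple_add_single_mem_diffLattice (by decide)
  convert add_mem hz (zsmul_mem ht (y 23)) using 1
  module

theorem charVec_mem_constructionB {O : Finset (Fin 24)} (hO : O ∈ tripleOctads) :
    charVec ℤ O ∈ constructionB GolayCode := by
  rw [mem_constructionB, modTwo_charVec, sum_charVec, hO.2.1]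
  exact ⟨hO.1, by norm_num⟩

theorem signedOctad_mem_TAB {O : Finset (Fin 24)} (hO : O ∈ tripleOctads) {p : Fin 24}
    (hpO : p ∈ O) (hp : p < 21) :
    (2 : ℤ) • charVec ℤ O + (4 : ℤ) • (-Pi.single p 1 - Pi.single 23 1) ∈ TAB := by
  have h21 : (21 : Fin 24) ∈ O := hO.2.2 (by decide)
  have h22 : (22 : Fin 24) ∈ O := hO.2.2 (by decide)
  have h23 : (23 : Fin 24) ∈ O := hO.2.2 (by decide)
  obtain ⟨hleech, hnorm, hA, hB⟩ := mem_TAB.1 (four_smul_neg_single_sub_single_mem_TAB hp)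
  refine mem_TAB.2 ⟨?_, ?_, ?_, ?_⟩
  · exact add_mem (two_smul_mem_leechLattice.2 (charVec_mem_constructionB hO)) hleech
  · have hself : charVec ℤ O ⬝ᵥ charVec ℤ O = 8 := by
      rw [charVec_dotProduct_self, hO.2.1, Nat.cast_ofNat]
    have hcross : charVec ℤ O ⬝ᵥ (-Pi.single p 1 - Pi.single 23 1) = -2 := by
      simp [charVec, hpO, h23]
    rw [add_dotProduct, dotProduct_add, dotProduct_add, hnorm,
      dotProduct_comm ((4 : ℤ) • _)]
    simp only [smul_dotProduct, dotProduct_smul, hself, hcross]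
    norm_num
  · simp only [Pi.add_apply, Pi.smul_apply (2 : ℤ), charVec, h21, h23, if_true]
    omega
  · simp only [Pi.add_apply, Pi.smul_apply (2 : ℤ), charVec, h22, h23, if_true]
    omega

theorem two_smul_charVec_mem_diffLattice {O : Finset (Fin 24)} (hO : O ∈ tripleOctads) :
    (2 : ℤ) • charVec ℤ O ∈ diffLattice := by
  obtain ⟨p, hpO, hp⟩ : ∃ p ∈ O, p ∉ ({21, 22, 23} : Finset (Fin 24)) :=
    Finset.exists_mem_notMem_of_card_lt_card (by rw [hO.2.1]; decide)
  have hlt : p < 21 := (by decide : ∀ q : Fin 24, q ∉ ({21, 22, 23} : Finset _) → q < 21) p hp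
  simpa using sub_mem_diffLattice (signedOctad_mem_TAB hO hpO hlt)
    (four_smul_neg_single_sub_single_mem_TAB hlt)

theorem exists_two_smul_mem_diffLattice_modTwo_eq {c : Fin 24 → ZMod 2} (hc : c ∈ GolayCode)
    (h21 : c 21 = c 23) (h22 : c 22 = c 23) :
    ∃ w : Fin 24 → ℤ, (2 : ℤ) • w ∈ diffLattice ∧ modTwo w = c := by
  have hspan := mem_span_tripleOctads hc h21 h22
  clear hc h21 h22
  induction hspan using Submodule.span_induction with
  | mem c hc =>
    obtain ⟨O, hO, rfl⟩ := hc
    exact ⟨charVec ℤ O, two_smul_charVec_mem_diffLattice hO, modTwo_charVec O⟩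
  | zero => exact ⟨0, by simp, map_zero _⟩
  | add c d _ _ hc hd =>
    obtain ⟨w, hw, rfl⟩ := hc
    obtain ⟨z, hz, rfl⟩ := hd
    exact ⟨w + z, smul_add (2 : ℤ) w z ▸ add_mem hw hz, map_add _ _ _⟩
  | smul a c _ hc =>
    obtain ⟨w, hw, rfl⟩ := hc
    obtain ⟨n, rfl⟩ := ZMod.intCast_surjective a
    refine ⟨n • w, smul_comm n (2 : ℤ) w ▸ zsmul_mem hw n, ?_⟩
    ext i
    simp

theorem two_smul_mem_diffLattice {u : Fin 24 → ℤ} (hu : (2 : ℤ) • u ∈ perpAB) :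
    (2 : ℤ) • u ∈ diffLattice := by
  obtain ⟨hleech, h21, h22⟩ := mem_perpAB.1 hu
  have hcode : modTwo u ∈ GolayCode := (two_smul_mem_leechLattice.1 hleech).1
  replace h21 : u 21 = u 23 := mul_left_cancel₀ two_ne_zero h21
  replace h22 : u 22 = u 23 := mul_left_cancel₀ two_ne_zero h22
  obtain ⟨w, hw, hwu⟩ := exists_two_smul_mem_diffLattice_modTwo_eq hcode
    (congrArg Int.cast h21) (congrArg Int.cast h22)
  obtain ⟨y, rfl⟩ := exists_eq_add_two_smul_of_modTwo_eq hwu.symm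
  have hsplit : (2 : ℤ) • (w + (2 : ℤ) • y) = (2 : ℤ) • w + (4 : ℤ) • y := by module
  rw [hsplit] at hu ⊢
  have hy : (4 : ℤ) • y ∈ perpAB := (add_mem_cancel_left (diffLattice_le_perpAB hw)).1 hu
  exact add_mem hw (four_smul_mem_diffLattice hy)

theorem perpAB_le_diffLattice : perpAB ≤ diffLattice := by
  intro v hv
  obtain ⟨m, u, -, rfl⟩ := mem_leechLattice.1 (mem_perpAB.1 hv).1
  have hodd : m • (oddVec - (4 : ℤ) • (Pi.single 21 1 + Pi.single 22 1)) ∈ diffLattice :=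
    zsmul_mem (sub_mem_diffLattice oddVec_mem_TAB four_smul_single_add_single_mem_TAB) m
  have hsplit : m • oddVec + (2 : ℤ) • u =
      m • (oddVec - (4 : ℤ) • (Pi.single 21 1 + Pi.single 22 1)) +
        (2 : ℤ) • (u + (2 * m) • (Pi.single 21 1 + Pi.single 22 1)) := by module
  rw [hsplit] at hv ⊢
  exact add_mem hodd <| two_smul_mem_diffLattice <|
    (add_mem_cancel_left (diffLattice_le_perpAB hodd)).1 hv

/-- the sublattice of `Λ₂₄` generated by all differences
`T − T′` with `T, T′ ∈ T_AB` equals the orthogonal complement of (the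
primitive sublattice containing) `A` and `B` in `Λ₂₄`. -/
theorem diff_closure_eq_perp :
    (AddSubgroup.closure {d : Fin 24 → ℤ | ∃ T ∈ TAB, ∃ T' ∈ TAB, d = T - T'}
        : Set (Fin 24 → ℤ))
      = {v | IsLeech v ∧ leechInner v vA = 0 ∧ leechInner v vB = 0} := by
  have hlattice : diffLattice = perpAB :=
    le_antisymm diffLattice_le_perpAB perpAB_le_diffLattice
  exact (congrArg SetLike.coe hlattice).trans
    (Set.ext fun _ => mem_perpAB_iff_leechInner_eq_zero)
end
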